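/- Let p, q be integers with min(p,q) ≥ 2 and let λ be a positive real number. Let Ω = {Z ∈ M_{p×q}(ℂ) : I_p − Z Z^H is positive definite} with generic norm N(Z) = det(I_p − Z Z^H), and let M = {(Z,ξ) ∈ Ω × ℂ : |ξ|² = N(Z)^λ}, where the real power of the positive real N(Z) is used. Let U ⊆ M_{p×q}(ℂ) × ℂ be a connected open set with U ∩ M ≠ ∅ and let F : U → M_{p×q}(ℂ) × ℂ be a nonconstant holomorphic map with F(U ∩ M) ⊆ M. Then there exist a biholomorphism ψ : Ω → Ω and a holomorphic function h : Ω → ℂ with h(Z) ≠ 0 for all Z ∈ Ω, such that det(I_p − ψ(Z)ψ(Z)^H)^λ = |h(Z)|²·det(I_p − Z Z^H)^λ for all Z ∈ Ω, and the map (Z,ξ) ↦ (ψ(Z), ξ·h(Z)) coincides with F on some nonempty open subset of U. -/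

import Mathlib

noncomputable section

open Complex Matrix
open scoped ComplexOrder

/-- `Biholo f s t`: `f` is a biholomorphism from `s` onto `t`. -/
def Biholo {E F : Type*} [NormedAddCommGroup E] [NormedSpace ℂ E]
    [NormedAddCommGroup F] [NormedSpace ℂ F]
    (f : E → F) (s : Set E) (t : Set F) : Prop :=
  DifferentiableOn ℂ f s ∧ Set.MapsTo f s t ∧
    ∃ g : F → E, DifferentiableOn ℂ g t ∧ Set.MapsTo g t s ∧
      Set.LeftInvOn g f s ∧ Set.RightInvOn g f t

/-- The type I classical domain `D^I_{p,q} = {Z : I_p − Z Zᴴ is positive definite}`,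
with `p × q` matrices identified with `Fin p → Fin q → ℂ`. -/
def typeIDomain (p q : ℕ) : Set (Fin p → Fin q → ℂ) :=
  {Z | ((1 : Matrix (Fin p) (Fin p) ℂ) - Matrix.of Z * (Matrix.of Z)ᴴ).PosDef}

/-- The generic norm `N(Z) = det(I_p − Z Zᴴ)` of the type I domain (its real part;
the determinant is real on the domain since `I_p − Z Zᴴ` is Hermitian). -/
def genNormI {p q : ℕ} (Z : Fin p → Fin q → ℂ) : ℝ :=
  (((1 : Matrix (Fin p) (Fin p) ℂ) - Matrix.of Z * (Matrix.of Z)ᴴ).det).re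

/-- The circle bundle `M = {(Z,ξ) ∈ Ω × ℂ : |ξ|² = N(Z)^λ}` (real power). -/
def circTypeIPow (p q : ℕ) (lam : ℝ) : Set ((Fin p → Fin q → ℂ) × ℂ) :=
  {P | P.1 ∈ typeIDomain p q ∧ Complex.normSq P.2 = genNormI P.1 ^ lam}

section

open Filter Topology Metric Set

section SeveralVariables

variable {E W : Type*} [NormedAddCommGroup E] [NormedSpace ℂ E]
  [NormedAddCommGroup W] [NormedSpace ℂ W]

/-- Cauchy's estimate for the Fréchet derivative. -/
lemma norm_fderiv_le_of_ball {f : E → W} {c : E} {r C : ℝ} (hr : 0 < r)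
    (hd : DifferentiableOn ℂ f (ball c r)) (hC : ∀ z ∈ ball c r, ‖f z‖ ≤ C) :
    ‖fderiv ℂ f c‖ ≤ 2 * C / r := by
  refine norm_fderiv_le_div_of_mapsTo_ball hd (fun z hz => ?_) hr
  rw [mem_closedBall, dist_eq_norm]
  calc ‖f z - f c‖ ≤ ‖f z‖ + ‖f c‖ := norm_sub_le _ _
    _ ≤ 2 * C := by linarith [hC z hz, hC c (mem_ball_self hr)]

/-- A uniform limit of holomorphic maps on a ball is holomorphic. -/
lemma differentiableAt_of_tendstoUniformlyOn_ball [CompleteSpace W] {g : ℕ → E → W} {G : E → W}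
    {c : E} {r : ℝ} (hr : 0 < r) (hg : ∀ n, DifferentiableOn ℂ (g n) (ball c r))
    (hlim : TendstoUniformlyOn g G atTop (ball c r)) : DifferentiableAt ℂ G c := by
  have hsub : ∀ x ∈ ball c (r / 2), ball x (r / 2) ⊆ ball c r := fun x hx =>
    ball_subset_ball' (by rw [mem_ball] at hx; linarith)
  have hx' : ∀ x ∈ ball c (r / 2), x ∈ ball c r := fun x hx =>
    ball_subset_ball (by linarith) hx
  have hcau : UniformCauchySeqOn (fun n x => fderiv ℂ (g n) x) atTop (ball c (r / 2)) := by
    rw [Metric.uniformCauchySeqOn_iff]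
    intro ε hε
    have hlim' := hlim.uniformCauchySeqOn
    rw [Metric.uniformCauchySeqOn_iff] at hlim'
    obtain ⟨N, hN⟩ := hlim' (ε * r / 8) (by positivity)
    refine ⟨N, fun m hm n hn x hx => ?_⟩
    have hm' : DifferentiableAt ℂ (g m) x := (hg m).differentiableAt (isOpen_ball.mem_nhds (hx' x hx))
    have hn' : DifferentiableAt ℂ (g n) x := (hg n).differentiableAt (isOpen_ball.mem_nhds (hx' x hx))
    rw [dist_eq_norm, ← fderiv_sub hm' hn']
    have := norm_fderiv_le_of_ball (f := g m - g n) (C := ε * r / 8) (half_pos hr)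
      (((hg m).sub (hg n)).mono (hsub x hx)) (fun z hz => by
        have := hN m hm n hn z (hsub x hx hz)
        rw [dist_eq_norm] at this
        exact this.le)
    refine this.trans_lt ?_
    have : 2 * (ε * r / 8) / (r / 2) = ε / 2 := by field_simp; norm_num
    rw [this]; linarith
  have hpt : ∀ x ∈ ball c (r / 2), ∃ L, Tendsto (fun n => fderiv ℂ (g n) x) atTop (𝓝 L) :=
    fun x hx => cauchySeq_tendsto_of_complete (hcau.cauchySeq hx)
  choose! L hL using hpt
  have hU := hcau.tendstoUniformlyOn_of_tendsto hL
  exact (hasFDerivAt_of_tendstoUniformlyOn isOpen_ball hU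
    (fun n x hx => ((hg n).differentiableAt (isOpen_ball.mem_nhds (hx' x hx))).hasFDerivAt)
    (fun x hx => hlim.tendsto_at (hx' x hx)) (mem_ball_self (half_pos hr))).differentiableAt

/-- The derivative of a holomorphic map is locally Lipschitz. -/
lemma exists_lipschitz_fderiv {f : E → W} {c : E} (hf : ∀ᶠ x in 𝓝 c, DifferentiableAt ℂ f x) :
    ∃ r > 0, ∃ C ≥ 0, (∀ x ∈ ball c r, DifferentiableAt ℂ f x) ∧
      ∀ x ∈ ball c r, ∀ y ∈ ball c r, ‖fderiv ℂ f x - fderiv ℂ f y‖ ≤ C * ‖x - y‖ := by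
  have hb : ∀ᶠ x in 𝓝 c, ‖f x‖ ≤ ‖f c‖ + 1 := by
    have := hf.self_of_nhds.continuousAt.norm.eventually (gt_mem_nhds (lt_add_one ‖f c‖))
    exact this.mono fun x hx => hx.le
  obtain ⟨R, hR, hball⟩ := Metric.eventually_nhds_iff_ball.1 (hf.and hb)
  set C := ‖f c‖ + 1
  have hC : 0 < C := by positivity
  set r := R / 8 with hrdef
  have hr : 0 < r := by positivity
  have hfd : ∀ x ∈ ball c (4 * r), ‖fderiv ℂ f x‖ ≤ 2 * C / r := fun x hx =>
    have hs : ball x r ⊆ ball c R := ball_subset_ball' (by rw [mem_ball] at hx; linarith)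
    norm_fderiv_le_of_ball hr
      (fun z hz => ((hball z (hs hz)).1).differentiableWithinAt) (fun z hz => (hball z (hs hz)).2)
  have hlip : ∀ x ∈ ball c (4 * r), ∀ y ∈ ball c (4 * r), ‖f y - f x‖ ≤ 2 * C / r * ‖y - x‖ :=
    fun x hx y hy => (convex_ball c (4 * r)).norm_image_sub_le_of_norm_fderiv_le (𝕜 := ℂ)
      (fun z hz => (hball z (ball_subset_ball (by linarith) hz)).1) hfd hx hy
  refine ⟨r, hr, 4 * C / r ^ 2, by positivity,
    fun x hx => (hball x (ball_subset_ball (by linarith) hx)).1, fun x hx y hy => ?_⟩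
  rw [mem_ball, dist_eq_norm] at hx hy
  have hv : ‖y - x‖ < 2 * r := by
    calc ‖y - x‖ = ‖(y - c) - (x - c)‖ := by congr 1; abel
      _ ≤ ‖y - c‖ + ‖x - c‖ := norm_sub_le _ _
      _ < 2 * r := by linarith
  have hz1 : ∀ z ∈ ball x r, z ∈ ball c (4 * r) := fun z hz => by
    rw [mem_ball, dist_eq_norm] at *
    calc ‖z - c‖ = ‖(z - x) + (x - c)‖ := by congr 1; abel
      _ ≤ ‖z - x‖ + ‖x - c‖ := norm_add_le _ _
      _ < 4 * r := by linarith
  have hz2 : ∀ z ∈ ball x r, z + (y - x) ∈ ball c (4 * r) := fun z hz => by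
    rw [mem_ball, dist_eq_norm] at *
    calc ‖z + (y - x) - c‖ = ‖(z - x) + (y - c)‖ := by congr 1; abel
      _ ≤ ‖z - x‖ + ‖y - c‖ := norm_add_le _ _
      _ < 4 * r := by linarith
  have hdz : ∀ z ∈ ball c (4 * r), DifferentiableAt ℂ f z := fun z hz =>
    (hball z (ball_subset_ball (by linarith) hz)).1
  have key := norm_fderiv_le_of_ball (f := fun z => f (z + (y - x)) - f z) (c := x)
    (C := 2 * C / r * ‖y - x‖) hr
    (fun z hz => by
      have h2 := hdz _ (hz2 z hz)
      have h1 := hdz z (hz1 z hz)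
      exact ((h2.comp z (f := fun z => z + (y - x)) (by fun_prop)).sub h1).differentiableWithinAt)
    (fun z hz => by
      have := hlip z (hz1 z hz) _ (hz2 z hz)
      simpa using this)
  have hx0 := mem_ball_self (x := x) hr
  have hder : fderiv ℂ (fun z => f (z + (y - x)) - f z) x = fderiv ℂ f y - fderiv ℂ f x := by
    have e1 := hdz _ (hz2 x hx0)
    have e2 : DifferentiableAt ℂ (fun z => f (z + (y - x))) x :=
      e1.comp x (f := fun z => z + (y - x)) (by fun_prop)
    rw [fderiv_fun_sub e2 (hdz x (hz1 x hx0)), fderiv_comp_add_right]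
    simp
  rw [hder] at key
  rw [norm_sub_rev, norm_sub_rev x y]
  refine key.trans (le_of_eq ?_)
  field_simp
  ring

/-- Holomorphic maps are strictly differentiable. -/
lemma hasStrictFDerivAt_of_eventually {f : E → W} {c : E}
    (hf : ∀ᶠ x in 𝓝 c, DifferentiableAt ℂ f x) : HasStrictFDerivAt f (fderiv ℂ f c) c := by
  obtain ⟨r, hr, C, hC, hd, hl⟩ := exists_lipschitz_fderiv hf
  refine hasStrictFDerivAt_of_hasFDerivAt_of_continuousAt
    (f' := fun x => fderiv ℂ f x) (hf.mono fun x hx => hx.hasFDerivAt) ?_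
  rw [ContinuousAt, tendsto_iff_norm_sub_tendsto_zero]
  have hlim : Tendsto (fun x => C * ‖x - c‖) (𝓝 c) (𝓝 0) := by
    have : Continuous fun x : E => C * ‖x - c‖ := by fun_prop
    simpa using this.tendsto c
  refine squeeze_zero' (.of_forall fun x => norm_nonneg _) ?_ hlim
  filter_upwards [ball_mem_nhds c hr] with x hx
  exact hl x hx c (mem_ball_self hr)

/-- Directional derivatives of holomorphic maps are holomorphic. -/
lemma differentiableAt_fderiv_apply [CompleteSpace W] {f : E → W} {c : E}
    (hf : ∀ᶠ x in 𝓝 c, DifferentiableAt ℂ f x) (v : E) :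
    DifferentiableAt ℂ (fun x => fderiv ℂ f x v) c := by
  obtain ⟨r, hr, C, hC, hd, hl⟩ := exists_lipschitz_fderiv hf
  obtain ⟨N, hN⟩ := exists_nat_gt (2 * ‖v‖ / r)
  have hN0 : (0 : ℝ) ≤ 2 * ‖v‖ / r := by positivity
  set t : ℕ → ℂ := fun n => ((n + N + 1 : ℕ) : ℂ)⁻¹
  have htn : ∀ n, ‖t n‖ = ((n + N + 1 : ℕ) : ℝ)⁻¹ := fun n => by
    simp only [t, norm_inv, Complex.norm_natCast]
  have ht0 : ∀ n, t n ≠ 0 := fun n => inv_ne_zero (by positivity)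
  have htv : ∀ n, ‖t n • v‖ < r / 2 := fun n => by
    rw [norm_smul, htn, inv_mul_eq_div, div_lt_iff₀ (by positivity)]
    rw [div_lt_iff₀ hr] at hN
    push_cast
    nlinarith [hN, (Nat.cast_nonneg n : (0:ℝ) ≤ n)]
  have hmem : ∀ n, ∀ x ∈ ball c (r / 2), x + t n • v ∈ ball c r := fun n x hx => by
    rw [mem_ball, dist_eq_norm] at *
    calc ‖x + t n • v - c‖ = ‖(x - c) + t n • v‖ := by congr 1; abel
      _ ≤ ‖x - c‖ + ‖t n • v‖ := norm_add_le _ _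
      _ < r := by linarith [htv n]
  have hmem' : ∀ x ∈ ball c (r / 2), x ∈ ball c r := fun x hx =>
    ball_subset_ball (by linarith) hx
  refine differentiableAt_of_tendstoUniformlyOn_ball
    (g := fun n x => (t n)⁻¹ • (f (x + t n • v) - f x)) (half_pos hr) (fun n x hx => ?_) ?_
  · have h1 := hd _ (hmem n x hx)
    exact (((h1.comp x (f := fun z => z + t n • v) (by fun_prop)).sub
      (hd x (hmem' x hx))).const_smul _).differentiableWithinAt
  · have hbound : ∀ n, ∀ x ∈ ball c (r / 2),
        ‖(t n)⁻¹ • (f (x + t n • v) - f x) - fderiv ℂ f x v‖ ≤ ‖t n‖ * (C * ‖v‖ * ‖v‖) := by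
      intro n x hx
      have hseg : segment ℝ x (x + t n • v) ⊆ ball c r :=
        (convex_ball c r).segment_subset (hmem' x hx) (hmem n x hx)
      have := (convex_segment x (x + t n • v)).norm_image_sub_le_of_norm_hasFDerivWithin_le'
        (𝕜 := ℂ) (f := f) (f' := fun z => fderiv ℂ f z) (φ := fderiv ℂ f x)
        (C := C * ‖t n • v‖) (fun z hz => (hd z (hseg hz)).hasFDerivAt.hasFDerivWithinAt)
        (fun z hz => by
          refine (hl z (hseg hz) x (hmem' x hx)).trans ?_
          refine mul_le_mul_of_nonneg_left ?_ hC
          obtain ⟨a, b, ha, hb, hab, rfl⟩ := hz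
          have : a • x + b • (x + t n • v) - x = b • (t n • v) := by
            rw [smul_add, ← add_assoc, ← add_smul, hab, one_smul]; abel
          rw [this, norm_smul, Real.norm_of_nonneg hb]
          exact mul_le_of_le_one_left (norm_nonneg _) (by linarith))
        (left_mem_segment ℝ _ _) (right_mem_segment ℝ _ _)
      rw [add_sub_cancel_left, map_smul] at this
      have e : (t n)⁻¹ • (f (x + t n • v) - f x) - fderiv ℂ f x v
          = (t n)⁻¹ • (f (x + t n • v) - f x - t n • fderiv ℂ f x v) := by
        rw [smul_sub _ _ (t n • _), inv_smul_smul₀ (ht0 n)]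
      rw [e, norm_smul, norm_inv, inv_mul_le_iff₀ (norm_pos_iff.2 (ht0 n))]
      refine this.trans (le_of_eq ?_)
      rw [norm_smul]; ring
    have htlim : Tendsto (fun n => ‖t n‖ * (C * ‖v‖ * ‖v‖)) atTop (𝓝 0) := by
      have h1 : Tendsto (fun n : ℕ => ((n + N + 1 : ℕ) : ℝ)⁻¹) atTop (𝓝 0) :=
        tendsto_inv_atTop_zero.comp (tendsto_natCast_atTop_atTop.comp
          (tendsto_atTop_mono (fun n => by simp only [id]; omega) tendsto_id))
      simpa [htn] using h1.mul_const (C * ‖v‖ * ‖v‖)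
    rw [Metric.tendstoUniformlyOn_iff]
    intro ε hε
    filter_upwards [htlim.eventually (gt_mem_nhds hε)] with n hn x hx
    rw [dist_comm, dist_eq_norm]
    exact (hbound n x hx).trans_lt hn

/-- Polarization: a holomorphic map of `(z, y)` that vanishes on `y = star z` vanishes. -/
lemma eventually_eq_zero_of_polarization [CompleteSpace W] [StarAddMonoid E] [StarModule ℂ E] [ContinuousStar E]
    {K : E × E → W} (hK : ∀ᶠ x in 𝓝 0, DifferentiableAt ℂ K x)
    (h0 : ∀ᶠ z in 𝓝 (0 : E), K (z, star z) = 0) : ∀ᶠ x in 𝓝 (0 : E × E), K x = 0 := by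
  obtain ⟨r, hr, hb⟩ := Metric.eventually_nhds_iff_ball.1 hK
  obtain ⟨δ, hδ, hd⟩ := Metric.eventually_nhds_iff_ball.1 h0
  let u : E × E → E := fun x => (2 : ℂ)⁻¹ • (x.1 + star x.2)
  let v : E × E → E := fun x => (-(I / 2) : ℂ) • (x.1 - star x.2)
  let γ : E × E → ℂ → E × E := fun x ζ => (u x + ζ • v x, star (u x) + ζ • star (v x))
  have hγ : Continuous fun p : (E × E) × ℂ => γ p.1 p.2 := by fun_prop
  have hγ0 : ∀ ζ, γ 0 ζ = 0 := fun ζ => by simp [γ, u, v]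
  have hγb : ∀ᶠ x in 𝓝 (0 : E × E), ∀ ζ ∈ closedBall (0 : ℂ) 2, γ x ζ ∈ ball (0 : E × E) r := by
    have := (isCompact_closedBall (0 : ℂ) 2).eventually_forall_of_forall_eventually
      (x₀ := (0 : E × E)) (P := fun x ζ => γ x ζ ∈ ball (0 : E × E) r) (fun ζ _ => by
        have h1 := hγ.tendsto ((0 : E × E), ζ)
        simp only [hγ0] at h1
        exact h1.eventually (ball_mem_nhds _ hr))
    exact this
  have hu : ∀ᶠ x in 𝓝 (0 : E × E), u x ∈ ball (0 : E) δ := by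
    have : Continuous u := by fun_prop
    have h1 := this.tendsto 0
    have h2 : u 0 = 0 := by simp [u]
    rw [h2] at h1
    exact h1.eventually (ball_mem_nhds _ hδ)
  filter_upwards [hγb, hu] with x hx hux
  have han : AnalyticOnNhd ℂ (fun ζ => K (γ x ζ)) (ball 0 2) := by
    apply DifferentiableOn.analyticOnNhd _ isOpen_ball
    intro ζ hζ
    have h1 := hb _ (hx ζ (ball_subset_closedBall hζ))
    exact (h1.comp ζ (f := fun ζ => γ x ζ) (by fun_prop)).differentiableWithinAt
  have hreal : ∀ᶠ s : ℝ in 𝓝 0, K (γ x s) = 0 := by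
    have hc : Continuous fun s : ℝ => u x + (s : ℂ) • v x := by fun_prop
    have h1 := hc.tendsto 0
    simp only [ofReal_zero, zero_smul, add_zero] at h1
    filter_upwards [h1.eventually (isOpen_ball.mem_nhds hux)] with s hs
    have := hd _ hs
    have e : star (u x + (s : ℂ) • v x) = star (u x) + (s : ℂ) • star (v x) := by
      rw [star_add, star_smul (s : ℂ) (v x), Complex.star_def, conj_ofReal]
    rwa [e] at this
  have hfreq : ∃ᶠ ζ in 𝓝[≠] (0 : ℂ), K (γ x ζ) = 0 := by
    have h1 : Tendsto (fun s : ℝ => (s : ℂ)) (𝓝[≠] 0) (𝓝[≠] 0) := by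
      refine tendsto_nhdsWithin_iff.2 ⟨?_, ?_⟩
      · exact (continuous_ofReal.tendsto' 0 0 (by simp)).mono_left nhdsWithin_le_nhds
      · filter_upwards [self_mem_nhdsWithin] with s hs
        simpa using hs
    exact h1.frequently ((hreal.filter_mono nhdsWithin_le_nhds).frequently)
  have hz := han.eqOn_zero_of_preconnected_of_frequently_eq_zero
    (convex_ball 0 2).isPreconnected (mem_ball_self two_pos) hfreq
  have hI : (I : ℂ) ∈ ball (0 : ℂ) 2 := by simp
  have hfin := hz hI
  have e : γ x I = x := by
    refine Prod.ext ?_ ?_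
    · simp only [γ, u, v, smul_smul]
      have : I * -(I / 2) = (2 : ℂ)⁻¹ := by
        rw [mul_neg, ← mul_div_assoc, I_mul_I]; norm_num
      rw [this]
      module
    · have h2 : star ((2 : ℂ)⁻¹) = (2 : ℂ)⁻¹ := by simp
      have h3 : star (-(I / 2) : ℂ) = I / 2 := by simp [neg_div]
      have : I * (I / 2) = -(2 : ℂ)⁻¹ := by
        rw [← mul_div_assoc, I_mul_I]; norm_num
      simp only [γ, u, v]
      rw [star_smul (2 : ℂ)⁻¹, star_smul (-(I / 2) : ℂ), h2, h3, smul_smul, this, star_add,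
        star_sub, star_star]
      module
  simpa [e] using hfin

/-- The identity theorem for maps that are locally constant at one point. -/
lemma eqOn_const_of_eventually [CompleteSpace W] {f : E → W} {U : Set E} (hU : IsOpen U)
    (hc : IsPreconnected U) (hf : DifferentiableOn ℂ f U) {x₀ : E} (hx₀ : x₀ ∈ U) {w : W}
    (h : ∀ᶠ x in 𝓝 x₀, f x = w) : EqOn f (fun _ => w) U := by
  suffices hs : U ⊆ {x | ∀ᶠ y in 𝓝 x, f y = w} from fun x hx => (hs hx).self_of_nhds
  refine hc.subset_of_closure_inter_subset isOpen_setOfPred_eventually_nhds ⟨x₀, hx₀, h⟩ ?_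
  rintro x ⟨hx, hxU⟩
  obtain ⟨r, hr, hb⟩ := Metric.isOpen_iff.1 hU x hxU
  obtain ⟨y, hy, hyx⟩ := Metric.mem_closure_iff.1 hx r hr
  rw [dist_comm] at hyx
  filter_upwards [ball_mem_nhds x hr] with z hz
  set l : ℂ → E := fun ζ => y + ζ • (z - y)
  have hl : Continuous l := by fun_prop
  have hconv : Convex ℝ (l ⁻¹' ball x r) := by
    intro a ha b hb s t hs ht hst
    have : l (s • a + t • b) = s • l a + t • l b := by
      obtain rfl : s = 1 - t := by linarith
      simp only [l, Complex.real_smul, ofReal_sub, ofReal_one]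
      module
    rw [mem_preimage, this]
    exact convex_ball x r ha hb hs ht hst
  have han : AnalyticOnNhd ℂ (fun ζ => f (l ζ)) (l ⁻¹' ball x r) := by
    apply DifferentiableOn.analyticOnNhd _ (isOpen_ball.preimage hl)
    intro ζ hζ
    have h1 := hf.differentiableAt (hU.mem_nhds (hb hζ))
    exact (h1.comp ζ (f := l) (by fun_prop)).differentiableWithinAt
  have h0 : ∀ᶠ ζ in 𝓝 (0 : ℂ), f (l ζ) = w := by
    have h1 := hl.tendsto 0
    have h2 : l 0 = y := by simp [l]
    rw [h2] at h1
    exact h1.eventually hy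
  have := han.eqOn_of_preconnected_of_eventuallyEq (g := fun _ => w) analyticOnNhd_const
    hconv.isPreconnected (z₀ := 0) (by simpa [l] using hyx) h0
  have h1 := this (x := 1) (by simpa [l] using hz)
  simpa [l] using h1

/-- Holomorphic logarithms on convex open sets. -/
lemma exists_differentiableOn_log {s : Set E} (ho : IsOpen s) (hc : Convex ℝ s)
    (hne : s.Nonempty) {g : E → ℂ} (hg : DifferentiableOn ℂ g s) (h0 : ∀ z ∈ s, g z ≠ 0) :
    ∃ H : E → ℂ, DifferentiableOn ℂ H s ∧ ∀ z ∈ s, exp (H z) = g z := by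
  have hsc : IsSimplyConnected s := by
    have := hc.contractibleSpace hne
    exact (inferInstance : SimplyConnectedSpace s)
  obtain ⟨H, hH, he⟩ := Complex.exists_continuousOn_eqOn_exp_comp hsc ho hg.continuousOn
    (by rintro ⟨z, hz, hz0⟩; exact h0 z hz hz0)
  refine ⟨H, fun z hz => ?_, he⟩
  have hlog : (fun y => H z + log (g y * (g z)⁻¹)) =ᶠ[𝓝 z] H := by
    have hcont : ContinuousAt H z := hH.continuousAt (ho.mem_nhds hz)
    have h1 : ∀ᶠ y in 𝓝 z, ‖H y - H z‖ < Real.pi := by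
      have := (hcont.sub (continuousAt_const (y := H z))).norm
      refine this.eventually (gt_mem_nhds ?_)
      simpa using Real.pi_pos
    filter_upwards [h1, ho.mem_nhds hz] with y hy hys
    have e : g y * (g z)⁻¹ = exp (H y - H z) := by
      rw [exp_sub, ← div_eq_mul_inv, ← he hys, ← he hz]; rfl
    have him := (abs_im_le_norm (H y - H z)).trans_lt hy
    rw [e, log_exp (by linarith [(abs_lt.1 him).1]) (by linarith [(abs_lt.1 him).2])]
    ring
  refine DifferentiableAt.differentiableWithinAt (DifferentiableAt.congr_of_eventuallyEq ?_ hlog.symm)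
  have hgz := hg.differentiableAt (ho.mem_nhds hz)
  refine (differentiableAt_const _).add (DifferentiableAt.clog (hgz.mul_const (g z)⁻¹) ?_)
  rw [mul_inv_cancel₀ (h0 z hz)]
  exact one_mem_slitPlane

end SeveralVariables

section MatrixNorm

open scoped Matrix.Norms.L2Operator

variable {m n : Type*} [Fintype m] [Fintype n]

lemma ofReal_norm_toLp_sq (v : m → ℂ) : ((‖WithLp.toLp 2 v‖ ^ 2 : ℝ) : ℂ) = star v ⬝ᵥ v := by
  rw [EuclideanSpace.norm_sq_eq, dotProduct]
  push_cast
  refine Finset.sum_congr rfl fun i _ => ?_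
  rw [Pi.star_apply, Complex.star_def, Complex.conj_mul']

lemma star_dotProduct_one_sub_mul_conjTranspose [DecidableEq m] (A : Matrix m n ℂ) (x : m → ℂ) :
    star x ⬝ᵥ ((1 - A * Aᴴ) *ᵥ x) =
      ((‖WithLp.toLp 2 x‖ ^ 2 - ‖WithLp.toLp 2 (Aᴴ *ᵥ x)‖ ^ 2 : ℝ) : ℂ) := by
  rw [ofReal_sub, ofReal_norm_toLp_sq, ofReal_norm_toLp_sq, Matrix.sub_mulVec, Matrix.one_mulVec,
    dotProduct_sub, star_mulVec, conjTranspose_conjTranspose, ← mulVec_mulVec,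
    dotProduct_mulVec (star x)]

variable [DecidableEq m] [DecidableEq n]

/-- `I - A Aᴴ` is positive definite exactly when `A` is a strict contraction. -/
lemma posDef_one_sub_mul_conjTranspose_iff (A : Matrix m n ℂ) :
    (1 - A * Aᴴ).PosDef ↔ ‖A‖ < 1 := by
  have hherm : (1 - A * Aᴴ).IsHermitian := by
    simp [Matrix.IsHermitian, conjTranspose_sub, conjTranspose_mul]
  constructor
  · intro h
    have hlt : ∀ x : EuclideanSpace ℂ m, ‖x‖ = 1 → ‖WithLp.toLp 2 (Aᴴ *ᵥ x.ofLp)‖ < 1 := by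
      intro x hx
      have hx0 : x.ofLp ≠ 0 := by
        rintro h0
        have : x = 0 := by ext i; simp [h0]
        simp [this] at hx
      have h1 := h.dotProduct_mulVec_pos hx0
      rw [star_dotProduct_one_sub_mul_conjTranspose] at h1
      have h2 := Complex.zero_lt_real.1 h1
      rw [WithLp.toLp_ofLp, hx] at h2
      nlinarith [norm_nonneg (WithLp.toLp 2 (Aᴴ *ᵥ x.ofLp))]
    have hcont : Continuous fun x : EuclideanSpace ℂ m => ‖WithLp.toLp 2 (Aᴴ *ᵥ x.ofLp)‖ := by
      fun_prop
    rw [← l2_opNorm_conjTranspose]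
    obtain ⟨c, hc0, hc1, hc⟩ : ∃ c : ℝ, 0 ≤ c ∧ c < 1 ∧ ∀ x : EuclideanSpace ℂ m, ‖x‖ = 1 →
        ‖WithLp.toLp 2 (Aᴴ *ᵥ x.ofLp)‖ ≤ c := by
      rcases (sphere (0 : EuclideanSpace ℂ m) 1).eq_empty_or_nonempty with he | hne
      · exact ⟨0, le_rfl, one_pos, fun x hx => by
          have : x ∈ sphere (0 : EuclideanSpace ℂ m) 1 := by simpa using hx
          simp [he] at this⟩
      · obtain ⟨x, hx, hmax⟩ := (isCompact_sphere (0 : EuclideanSpace ℂ m) 1).exists_isMaxOn hne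
          hcont.continuousOn
        exact ⟨_, norm_nonneg _, hlt x (by simpa using hx), fun y hy => hmax (by simpa using hy)⟩
    refine lt_of_le_of_lt ?_ hc1
    rw [l2_opNorm_def]
    exact ContinuousLinearMap.opNorm_le_of_unit_norm hc0 hc
  · intro h
    refine .of_dotProduct_mulVec_pos hherm fun x hx => ?_
    rw [star_dotProduct_one_sub_mul_conjTranspose, Complex.zero_lt_real]
    have h1 := l2_opNorm_mulVec Aᴴ (WithLp.toLp 2 x)
    rw [l2_opNorm_conjTranspose] at h1
    have h2 : 0 < ‖WithLp.toLp 2 x‖ := norm_pos_iff.2 (by simpa using hx)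
    have h3 : ‖WithLp.toLp 2 (Aᴴ *ᵥ x)‖ < ‖WithLp.toLp 2 x‖ := by
      refine lt_of_le_of_lt h1 ?_
      nlinarith
    nlinarith [norm_nonneg (WithLp.toLp 2 (Aᴴ *ᵥ x))]

lemma posDef_one_sub_conjTranspose_mul_iff (A : Matrix m n ℂ) :
    (1 - Aᴴ * A).PosDef ↔ ‖A‖ < 1 := by
  have := posDef_one_sub_mul_conjTranspose_iff Aᴴ
  rwa [conjTranspose_conjTranspose, l2_opNorm_conjTranspose] at this

lemma det_one_sub_mul_ne_zero {A : Matrix m n ℂ} {B : Matrix n m ℂ} (hA : ‖A‖ < 1) (hB : ‖B‖ < 1) :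
    (1 - A * B).det ≠ 0 := by
  have h : ‖A * B‖ < 1 := (l2_opNorm_mul A B).trans_lt (by nlinarith [norm_nonneg A, norm_nonneg B])
  have := (isUnit_one_sub_of_norm_lt_one h)
  exact ((Matrix.isUnit_iff_isUnit_det _).1 this).ne_zero

end MatrixNorm

section MatrixDifferentiability

variable {E : Type*} [NormedAddCommGroup E] [NormedSpace ℂ E]
  {m n l : Type*} [Fintype n]

lemma DifferentiableAt.matrix_det [DecidableEq n] {M : E → Matrix n n ℂ} {x : E}
    (h : ∀ i j, DifferentiableAt ℂ (fun y => M y i j) x) :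
    DifferentiableAt ℂ (fun y => (M y).det) x := by
  simp only [Matrix.det_apply]
  fun_prop

lemma DifferentiableAt.matrix_mul {M : E → Matrix m n ℂ} {N : E → Matrix n l ℂ} {x : E}
    (hM : ∀ i j, DifferentiableAt ℂ (fun y => M y i j) x)
    (hN : ∀ i j, DifferentiableAt ℂ (fun y => N y i j) x) (i : m) (j : l) :
    DifferentiableAt ℂ (fun y => (M y * N y) i j) x := by
  simp only [Matrix.mul_apply]
  fun_prop

lemma DifferentiableAt.matrix_inv [DecidableEq n] {M : E → Matrix n n ℂ} {x : E}
    (h : ∀ i j, DifferentiableAt ℂ (fun y => M y i j) x) (h0 : (M x).det ≠ 0) (i j : n) :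
    DifferentiableAt ℂ (fun y => (M y)⁻¹ i j) x := by
  simp only [Matrix.inv_def, Ring.inverse_eq_inv', Matrix.smul_apply, smul_eq_mul,
    Matrix.adjugate_apply]
  refine (DifferentiableAt.matrix_det h).inv h0 |>.mul (DifferentiableAt.matrix_det fun k l => ?_)
  by_cases hk : k = j
  · subst hk; simp
  · simpa [Matrix.updateRow_ne hk] using h k l

end MatrixDifferentiability

section Moebius

open scoped Matrix.Norms.L2Operator

variable {m n : Type*} [Fintype m] [Fintype n] [DecidableEq m] [DecidableEq n]

open scoped MatrixOrder in
lemma exists_conjTranspose_mul_self_eq_inv {M : Matrix n n ℂ} (hM : M.PosDef) :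
    ∃ R : Matrix n n ℂ, R.det ≠ 0 ∧ Rᴴ * R = M⁻¹ := by
  obtain ⟨R, hR⟩ := CStarAlgebra.nonneg_iff_eq_star_mul_self.1 hM.inv.posSemidef.nonneg
  refine ⟨R, fun h => ?_, hR.symm⟩
  have h1 : M⁻¹.det ≠ 0 := ((Matrix.isUnit_iff_isUnit_det _).1 hM.inv.isUnit).ne_zero
  rw [hR, det_mul, h, mul_zero] at h1
  exact h1 rfl

variable {A : Matrix m n ℂ} {R : Matrix m m ℂ} {S : Matrix n n ℂ}

lemma inv_one_sub_mul_comm (hA : ‖A‖ < 1) :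
    (1 - A * Aᴴ)⁻¹ * A = A * (1 - Aᴴ * A)⁻¹ := by
  have h1 := (Matrix.isUnit_iff_isUnit_det _).1 ((posDef_one_sub_mul_conjTranspose_iff A).2 hA).isUnit
  have h2 := (Matrix.isUnit_iff_isUnit_det _).1 ((posDef_one_sub_conjTranspose_mul_iff A).2 hA).isUnit
  have h : A * (1 - Aᴴ * A) = (1 - A * Aᴴ) * A := by
    simp only [Matrix.mul_sub, Matrix.sub_mul, Matrix.mul_one, Matrix.one_mul, Matrix.mul_assoc]
  calc (1 - A * Aᴴ)⁻¹ * A = (1 - A * Aᴴ)⁻¹ * (A * (1 - Aᴴ * A)) * (1 - Aᴴ * A)⁻¹ := by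
        rw [← Matrix.mul_assoc, mul_nonsing_inv_cancel_right _ _ h2]
    _ = A * (1 - Aᴴ * A)⁻¹ := by rw [h, nonsing_inv_mul_cancel_left _ _ h1]

lemma inv_one_sub_mul_eq (hA : ‖A‖ < 1) :
    (1 - A * Aᴴ)⁻¹ = 1 + A * (1 - Aᴴ * A)⁻¹ * Aᴴ := by
  have h1 := (Matrix.isUnit_iff_isUnit_det _).1 ((posDef_one_sub_mul_conjTranspose_iff A).2 hA).isUnit
  have h := nonsing_inv_mul _ h1
  rw [Matrix.mul_sub, Matrix.mul_one, ← Matrix.mul_assoc, inv_one_sub_mul_comm hA,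
    sub_eq_iff_eq_add] at h
  exact h

lemma moebius_identity (hA : ‖A‖ < 1) (hR : Rᴴ * R = (1 - A * Aᴴ)⁻¹)
    (hS : Sᴴ * S = (1 - Aᴴ * A)⁻¹) {W Z : Matrix m n ℂ}
    (h : W * (S * (1 - Aᴴ * Z)) = R * (Z - A)) :
    (S * (1 - Aᴴ * Z))ᴴ * (1 - Wᴴ * W) * (S * (1 - Aᴴ * Z)) = 1 - Zᴴ * Z := by
  have hA' : ‖Aᴴ‖ < 1 := by rwa [l2_opNorm_conjTranspose]
  have e1 := inv_one_sub_mul_comm hA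
  have e2 := inv_one_sub_mul_eq hA
  have e3 := inv_one_sub_mul_comm hA'
  have e4 := inv_one_sub_mul_eq hA'
  rw [conjTranspose_conjTranspose] at e3 e4
  have step : (S * (1 - Aᴴ * Z))ᴴ * (1 - Wᴴ * W) * (S * (1 - Aᴴ * Z)) =
      (1 - Aᴴ * Z)ᴴ * (Sᴴ * S) * (1 - Aᴴ * Z) -
        (W * (S * (1 - Aᴴ * Z)))ᴴ * (W * (S * (1 - Aᴴ * Z))) := by
    rw [conjTranspose_mul W, Matrix.mul_sub, Matrix.sub_mul, Matrix.mul_one, conjTranspose_mul S]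
    simp only [Matrix.mul_assoc]
  rw [step, h, conjTranspose_mul, hS]
  have step2 : (Z - A)ᴴ * Rᴴ * (R * (Z - A)) = (Z - A)ᴴ * (1 - A * Aᴴ)⁻¹ * (Z - A) := by
    rw [← hR]; simp only [Matrix.mul_assoc]
  rw [step2]
  set P := (1 - A * Aᴴ)⁻¹
  set Q := (1 - Aᴴ * A)⁻¹
  simp only [conjTranspose_sub, conjTranspose_one, conjTranspose_mul, conjTranspose_conjTranspose,
    Matrix.mul_sub, Matrix.sub_mul, Matrix.mul_one, Matrix.one_mul]
  have f1 : Zᴴ * P * A = Zᴴ * A * Q := by rw [Matrix.mul_assoc, e1, Matrix.mul_assoc]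
  have f2 : Aᴴ * P * Z = Q * (Aᴴ * Z) := by rw [← e3, Matrix.mul_assoc]
  have f3 : Zᴴ * P * Z = Zᴴ * Z + Zᴴ * A * Q * (Aᴴ * Z) := by
    rw [e2]; simp only [Matrix.mul_add, Matrix.add_mul, Matrix.mul_one, Matrix.mul_assoc]
  have f4 : Aᴴ * P * A = Q - 1 := by rw [eq_sub_iff_add_eq, add_comm, ← e4]
  rw [f1, f2, f3, f4]
  abel

/-- The Möbius map of the unit ball of matrices that sends `A` to `0`. -/
def moebius (A : Matrix m n ℂ) (R : Matrix m m ℂ) (S : Matrix n n ℂ) (Z : Matrix m n ℂ) :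
    Matrix m n ℂ := R * (Z - A) * (S * (1 - Aᴴ * Z))⁻¹

/-- The inverse of the Möbius map `moebius A R S`. -/
def moebiusInv (A : Matrix m n ℂ) (R : Matrix m m ℂ) (S : Matrix n n ℂ) (W : Matrix m n ℂ) :
    Matrix m n ℂ := (1 + R⁻¹ * W * S * Aᴴ)⁻¹ * (R⁻¹ * W * S + A)

lemma det_moebius_denom_ne_zero (hA : ‖A‖ < 1) (hS0 : S.det ≠ 0) {Z : Matrix m n ℂ}
    (hZ : ‖Z‖ < 1) : (S * (1 - Aᴴ * Z)).det ≠ 0 := by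
  rw [det_mul]
  exact mul_ne_zero hS0 (det_one_sub_mul_ne_zero (by rwa [l2_opNorm_conjTranspose]) hZ)

lemma moebius_mul_denom (hA : ‖A‖ < 1) (hS0 : S.det ≠ 0) {Z : Matrix m n ℂ} (hZ : ‖Z‖ < 1) :
    moebius A R S Z * (S * (1 - Aᴴ * Z)) = R * (Z - A) := by
  rw [moebius, nonsing_inv_mul_cancel_right _ _ (det_moebius_denom_ne_zero hA hS0 hZ).isUnit]

lemma norm_lt_one_iff_of_moebius_relation (hA : ‖A‖ < 1) (hR : Rᴴ * R = (1 - A * Aᴴ)⁻¹)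
    (hS : Sᴴ * S = (1 - Aᴴ * A)⁻¹) {W Z : Matrix m n ℂ}
    (h : W * (S * (1 - Aᴴ * Z)) = R * (Z - A)) (hD : (S * (1 - Aᴴ * Z)).det ≠ 0) :
    ‖W‖ < 1 ↔ ‖Z‖ < 1 := by
  rw [← posDef_one_sub_conjTranspose_mul_iff, ← posDef_one_sub_conjTranspose_mul_iff,
    ← moebius_identity hA hR hS h]
  exact (Matrix.IsUnit.posDef_star_left_conjugate_iff
    ((Matrix.isUnit_iff_isUnit_det _).2 hD.isUnit)).symm

lemma det_moebiusInv_denom_ne_zero (hA : ‖A‖ < 1) (hR : Rᴴ * R = (1 - A * Aᴴ)⁻¹)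
    (hS : Sᴴ * S = (1 - Aᴴ * A)⁻¹) (hR0 : R.det ≠ 0) {W : Matrix m n ℂ} (hW : ‖W‖ < 1) :
    (1 + R⁻¹ * W * S * Aᴴ).det ≠ 0 := by
  have hb : ‖S * Aᴴ * R⁻¹‖ < 1 := by
    rw [← posDef_one_sub_conjTranspose_mul_iff]
    have hinv : R⁻¹ᴴ * Rᴴ = 1 := by
      rw [← conjTranspose_mul, mul_nonsing_inv _ hR0.isUnit, conjTranspose_one]
    have e : (S * Aᴴ * R⁻¹)ᴴ * (S * Aᴴ * R⁻¹) = 1 - R⁻¹ᴴ * R⁻¹ := by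
      have e2 : A * (Sᴴ * S) * Aᴴ = Rᴴ * R - 1 := by
        rw [hS, hR, inv_one_sub_mul_eq hA]; abel
      calc (S * Aᴴ * R⁻¹)ᴴ * (S * Aᴴ * R⁻¹) = R⁻¹ᴴ * (A * (Sᴴ * S) * Aᴴ) * R⁻¹ := by
            simp only [conjTranspose_mul, conjTranspose_conjTranspose, Matrix.mul_assoc]
        _ = 1 - R⁻¹ᴴ * R⁻¹ := by
            rw [e2, Matrix.mul_sub, Matrix.sub_mul, Matrix.mul_one, ← Matrix.mul_assoc, hinv,
              Matrix.one_mul, mul_nonsing_inv _ hR0.isUnit]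
    rw [e, sub_sub_cancel]
    refine Matrix.PosDef.conjTranspose_mul_self _ (mulVec_injective_of_isUnit ?_)
    rw [Matrix.isUnit_iff_isUnit_det]
    exact isUnit_nonsing_inv_det _ hR0.isUnit
  have e : (1 + R⁻¹ * W * S * Aᴴ).det = (1 - (-W) * (S * Aᴴ * R⁻¹)).det := by
    rw [Matrix.neg_mul, sub_neg_eq_add, Matrix.mul_assoc, Matrix.mul_assoc, det_one_add_mul_comm,
      Matrix.mul_assoc]
  rw [e]
  exact det_one_sub_mul_ne_zero (by rwa [norm_neg]) hb

lemma moebiusInv_relation (hA : ‖A‖ < 1) (hR : Rᴴ * R = (1 - A * Aᴴ)⁻¹)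
    (hS : Sᴴ * S = (1 - Aᴴ * A)⁻¹) (hR0 : R.det ≠ 0) {W : Matrix m n ℂ} (hW : ‖W‖ < 1) :
    W * (S * (1 - Aᴴ * moebiusInv A R S W)) = R * (moebiusInv A R S W - A) := by
  have hd := det_moebiusInv_denom_ne_zero hA hR hS hR0 hW
  set Z := moebiusInv A R S W with hZ
  have h1 : (1 + R⁻¹ * W * S * Aᴴ) * Z = R⁻¹ * W * S + A := by
    rw [hZ, moebiusInv, mul_nonsing_inv_cancel_left _ _ hd.isUnit]
  have h2 : Z - A = R⁻¹ * W * S * (1 - Aᴴ * Z) := by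
    rw [Matrix.add_mul, Matrix.one_mul] at h1
    rw [Matrix.mul_sub, Matrix.mul_one, ← Matrix.mul_assoc, sub_eq_sub_iff_add_eq_add, h1]
  rw [h2]
  simp only [Matrix.mul_assoc]
  rw [mul_nonsing_inv_cancel_left _ _ hR0.isUnit]

lemma det_denom_moebiusInv_ne_zero (hA : ‖A‖ < 1) (hR : Rᴴ * R = (1 - A * Aᴴ)⁻¹)
    (hS : Sᴴ * S = (1 - Aᴴ * A)⁻¹) (hR0 : R.det ≠ 0) (hS0 : S.det ≠ 0) {W : Matrix m n ℂ}
    (hW : ‖W‖ < 1) : (S * (1 - Aᴴ * moebiusInv A R S W)).det ≠ 0 := by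
  have h := moebiusInv_relation hA hR hS hR0 hW
  set Z := moebiusInv A R S W
  have h2 : Z - A = R⁻¹ * (W * (S * (1 - Aᴴ * Z))) := by
    rw [h, nonsing_inv_mul_cancel_left _ _ hR0.isUnit]
  have h3 : 1 - Aᴴ * A = (1 + Aᴴ * (R⁻¹ * (W * S))) * (1 - Aᴴ * Z) := by
    have : Aᴴ * (R⁻¹ * (W * S)) * (1 - Aᴴ * Z) = Aᴴ * (Z - A) := by
      rw [h2]; simp only [Matrix.mul_assoc]
    rw [Matrix.add_mul, this, Matrix.one_mul, Matrix.mul_sub]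
    abel
  have h4 : (1 - Aᴴ * A).det ≠ 0 :=
    ((Matrix.isUnit_iff_isUnit_det _).1
      ((posDef_one_sub_conjTranspose_mul_iff A).2 hA).isUnit).ne_zero
  rw [h3, det_mul] at h4
  rw [det_mul]
  exact mul_ne_zero hS0 (right_ne_zero_of_mul h4)

lemma moebius_moebiusInv (hA : ‖A‖ < 1) (hR : Rᴴ * R = (1 - A * Aᴴ)⁻¹)
    (hS : Sᴴ * S = (1 - Aᴴ * A)⁻¹) (hR0 : R.det ≠ 0) (hS0 : S.det ≠ 0) {W : Matrix m n ℂ}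
    (hW : ‖W‖ < 1) : moebius A R S (moebiusInv A R S W) = W := by
  have hd := det_denom_moebiusInv_ne_zero hA hR hS hR0 hS0 hW
  rw [moebius, ← moebiusInv_relation hA hR hS hR0 hW, mul_nonsing_inv_cancel_right _ _ hd.isUnit]

lemma norm_moebius_lt_one (hA : ‖A‖ < 1) (hR : Rᴴ * R = (1 - A * Aᴴ)⁻¹)
    (hS : Sᴴ * S = (1 - Aᴴ * A)⁻¹) (hS0 : S.det ≠ 0) {Z : Matrix m n ℂ}
    (hZ : ‖Z‖ < 1) : ‖moebius A R S Z‖ < 1 :=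
  (norm_lt_one_iff_of_moebius_relation hA hR hS (moebius_mul_denom hA hS0 hZ)
    (det_moebius_denom_ne_zero hA hS0 hZ)).2 hZ

lemma norm_moebiusInv_lt_one (hA : ‖A‖ < 1) (hR : Rᴴ * R = (1 - A * Aᴴ)⁻¹)
    (hS : Sᴴ * S = (1 - Aᴴ * A)⁻¹) (hR0 : R.det ≠ 0) (hS0 : S.det ≠ 0) {W : Matrix m n ℂ}
    (hW : ‖W‖ < 1) : ‖moebiusInv A R S W‖ < 1 :=
  (norm_lt_one_iff_of_moebius_relation hA hR hS (moebiusInv_relation hA hR hS hR0 hW)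
    (det_denom_moebiusInv_ne_zero hA hR hS hR0 hS0 hW)).1 hW

lemma moebiusInv_moebius (hA : ‖A‖ < 1) (hR : Rᴴ * R = (1 - A * Aᴴ)⁻¹)
    (hS : Sᴴ * S = (1 - Aᴴ * A)⁻¹) (hR0 : R.det ≠ 0) (hS0 : S.det ≠ 0) {Z : Matrix m n ℂ}
    (hZ : ‖Z‖ < 1) : moebiusInv A R S (moebius A R S Z) = Z := by
  have h := moebius_mul_denom (R := R) hA hS0 hZ
  have hd := det_moebiusInv_denom_ne_zero hA hR hS hR0 (norm_moebius_lt_one hA hR hS hS0 hZ)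
  rw [moebiusInv]
  set W := moebius A R S Z
  have h2 : R⁻¹ * W * S * (1 - Aᴴ * Z) = Z - A := by
    rw [Matrix.mul_assoc, Matrix.mul_assoc, h, nonsing_inv_mul_cancel_left _ _ hR0.isUnit]
  have h3 : R⁻¹ * W * S + A = (1 + R⁻¹ * W * S * Aᴴ) * Z := by
    rw [Matrix.mul_sub, Matrix.mul_one, ← Matrix.mul_assoc, sub_eq_sub_iff_add_eq_add] at h2
    rw [h2, Matrix.add_mul, Matrix.one_mul]
  rw [h3, nonsing_inv_mul_cancel_left _ _ hd.isUnit]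

end Moebius

section TypeI

open scoped Matrix.Norms.L2Operator

variable {p q : ℕ}

/-- The polarized generic norm `det (I - Z Yᵀ)`. -/
def polNorm (Z Y : Fin p → Fin q → ℂ) : ℂ := (1 - Matrix.of Z * (Matrix.of Y)ᵀ).det

lemma mem_typeIDomain_iff {Z : Fin p → Fin q → ℂ} :
    Z ∈ typeIDomain p q ↔ ‖Matrix.of Z‖ < 1 :=
  posDef_one_sub_mul_conjTranspose_iff (Matrix.of Z)

lemma zero_mem_typeIDomain : (0 : Fin p → Fin q → ℂ) ∈ typeIDomain p q := by
  rw [mem_typeIDomain_iff]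
  simp

lemma isOpen_typeIDomain : IsOpen (typeIDomain p q) := by
  have h : Continuous fun Z : Fin p → Fin q → ℂ => ‖Matrix.of Z‖ := by
    have : Continuous fun Z : Fin p → Fin q → ℂ => Matrix.of Z := continuous_id
    exact continuous_norm.comp this
  have e : typeIDomain p q = {Z | ‖Matrix.of Z‖ < 1} := by
    ext Z; exact mem_typeIDomain_iff
  rw [e]
  exact isOpen_lt h continuous_const

lemma convex_typeIDomain : Convex ℝ (typeIDomain p q) := by
  intro Z hZ Y hY a b ha hb hab
  rw [mem_typeIDomain_iff] at *
  have e : Matrix.of (a • Z + b • Y) = (a : ℂ) • Matrix.of Z + (b : ℂ) • Matrix.of Y := by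
    ext i j; simp
  rw [e]
  refine (norm_add_le _ _).trans_lt ?_
  rw [norm_smul, norm_smul, norm_real, norm_real, Real.norm_of_nonneg ha, Real.norm_of_nonneg hb]
  rcases ha.eq_or_lt with rfl | ha
  · obtain rfl : b = 1 := by linarith
    simpa using hY
  · nlinarith

lemma transpose_of_star (Z : Fin p → Fin q → ℂ) : (Matrix.of (star Z))ᵀ = (Matrix.of Z)ᴴ := rfl

lemma polNorm_star_self (Z : Fin p → Fin q → ℂ) : polNorm Z (star Z) = genNormI Z := by
  rw [polNorm, transpose_of_star, genNormI]
  symm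
  rw [← Complex.conj_eq_iff_re, starRingEnd_apply, ← det_conjTranspose]
  simp [conjTranspose_sub, conjTranspose_mul]

lemma genNormI_pos {Z : Fin p → Fin q → ℂ} (hZ : Z ∈ typeIDomain p q) : 0 < genNormI Z :=
  (Complex.pos_iff.1 (Matrix.PosDef.det_pos hZ)).1

lemma polNorm_star_ne_zero {Z Y : Fin p → Fin q → ℂ} (hZ : Z ∈ typeIDomain p q)
    (hY : Y ∈ typeIDomain p q) : polNorm Z (star Y) ≠ 0 := by
  rw [mem_typeIDomain_iff] at *
  exact det_one_sub_mul_ne_zero hZ (by rwa [transpose_of_star, l2_opNorm_conjTranspose])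

lemma polNorm_zero_left (Y : Fin p → Fin q → ℂ) : polNorm 0 Y = 1 := by simp [polNorm]

lemma polNorm_zero_right (Z : Fin p → Fin q → ℂ) : polNorm Z 0 = 1 := by
  simp [polNorm]

lemma genNormI_zero : genNormI (0 : Fin p → Fin q → ℂ) = 1 := by simp [genNormI]

lemma differentiable_polNorm :
    Differentiable ℂ fun P : (Fin p → Fin q → ℂ) × (Fin p → Fin q → ℂ) => polNorm P.1 P.2 := by
  intro P
  refine DifferentiableAt.matrix_det fun i j => ?_
  simp only [Matrix.sub_apply, Matrix.mul_apply, Matrix.of_apply, Matrix.transpose_apply]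
  fun_prop

/-- `IsFibAut ψ H`: the map `(Z, ω) ↦ (ψ Z, ω + H Z)` is a fibred automorphism of the hypersurface
`2 Re ω = log N(Z)`. -/
def IsFibAut (ψ : (Fin p → Fin q → ℂ) → (Fin p → Fin q → ℂ)) (H : (Fin p → Fin q → ℂ) → ℂ) : Prop :=
  Biholo ψ (typeIDomain p q) (typeIDomain p q) ∧ DifferentiableOn ℂ H (typeIDomain p q) ∧
    ∀ Z ∈ typeIDomain p q, Real.log (genNormI (ψ Z)) = 2 * (H Z).re + Real.log (genNormI Z)

lemma IsFibAut.comp {ψ₁ ψ₂ : (Fin p → Fin q → ℂ) → (Fin p → Fin q → ℂ)}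
    {H₁ H₂ : (Fin p → Fin q → ℂ) → ℂ} (h₂ : IsFibAut ψ₂ H₂) (h₁ : IsFibAut ψ₁ H₁) :
    IsFibAut (ψ₂ ∘ ψ₁) (fun Z => H₁ Z + H₂ (ψ₁ Z)) := by
  obtain ⟨⟨d1, m1, g1, dg1, mg1, l1, r1⟩, dH1, e1⟩ := h₁
  obtain ⟨⟨d2, m2, g2, dg2, mg2, l2, r2⟩, dH2, e2⟩ := h₂
  refine ⟨⟨d2.comp d1 m1, m2.comp m1, g1 ∘ g2, dg1.comp dg2 mg2, mg1.comp mg2,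
    fun Z hZ => ?_, fun Z hZ => ?_⟩, dH1.add (dH2.comp d1 m1), fun Z hZ => ?_⟩
  · simp [l2 (m1 hZ), l1 hZ]
  · simp [r1 (mg2 hZ), r2 hZ]
  · simp only [Function.comp_apply, add_re]
    rw [e2 _ (m1 hZ), e1 _ hZ]; ring

lemma IsFibAut.exists_symm {ψ : (Fin p → Fin q → ℂ) → (Fin p → Fin q → ℂ)}
    {H : (Fin p → Fin q → ℂ) → ℂ} (h : IsFibAut ψ H) :
    ∃ ψ' H', IsFibAut (p := p) (q := q) ψ' H' ∧
      (∀ Z ∈ typeIDomain p q, ψ' (ψ Z) = Z ∧ H Z + H' (ψ Z) = 0) ∧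
      (∀ Z ∈ typeIDomain p q, ψ (ψ' Z) = Z ∧ H' Z + H (ψ' Z) = 0) := by
  obtain ⟨⟨d, m, g, dg, mg, l, r⟩, dH, e⟩ := h
  refine ⟨g, fun Z => -H (g Z), ⟨⟨dg, mg, ψ, d, m, r, l⟩, (dH.comp dg mg).neg, fun Z hZ => ?_⟩,
    fun Z hZ => ⟨l hZ, ?_⟩, fun Z hZ => ⟨r hZ, ?_⟩⟩
  · have := e _ (mg hZ)
    rw [r hZ] at this
    rw [neg_re, this]; ring
  · simp [l hZ]
  · ring

/-- The Möbius automorphism of the type I domain sending `a` to the origin. -/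
lemma exists_biholo_moebius {a : Fin p → Fin q → ℂ} (ha : a ∈ typeIDomain p q) :
    ∃ ψ, Biholo ψ (typeIDomain p q) (typeIDomain p q) ∧ ψ a = 0 ∧ ∃ k : ℝ, 0 < k ∧
      ∀ Z ∈ typeIDomain p q, k * normSq (polNorm Z (star a)) * genNormI (ψ Z) = genNormI Z := by
  have hA := mem_typeIDomain_iff.1 ha
  set A := Matrix.of a with hAdef
  obtain ⟨R, hR0, hR⟩ := exists_conjTranspose_mul_self_eq_inv
    ((posDef_one_sub_mul_conjTranspose_iff A).2 hA)
  obtain ⟨S, hS0, hS⟩ := exists_conjTranspose_mul_self_eq_inv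
    ((posDef_one_sub_conjTranspose_mul_iff A).2 hA)
  have hdetZ : ∀ Z : Fin p → Fin q → ℂ, (1 - Aᴴ * Matrix.of Z).det = polNorm Z (star a) := fun Z => by
    rw [polNorm, transpose_of_star, Matrix.det_one_sub_mul_comm]
  let ψ : (Fin p → Fin q → ℂ) → (Fin p → Fin q → ℂ) := fun Z => Matrix.of.symm (moebius A R S (Matrix.of Z))
  let g : (Fin p → Fin q → ℂ) → (Fin p → Fin q → ℂ) := fun Z => Matrix.of.symm (moebiusInv A R S (Matrix.of Z))
  have hψa : ψ a = 0 := by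
    ext i j; simp [ψ, moebius, hAdef]
  have hψm : MapsTo ψ (typeIDomain p q) (typeIDomain p q) := fun Z hZ => by
    rw [mem_typeIDomain_iff] at *
    exact norm_moebius_lt_one hA hR hS hS0 hZ
  have hgm : MapsTo g (typeIDomain p q) (typeIDomain p q) := fun Z hZ => by
    rw [mem_typeIDomain_iff] at *
    exact norm_moebiusInv_lt_one hA hR hS hR0 hS0 hZ
  have hent : ∀ (Z : Fin p → Fin q → ℂ) i j,
      DifferentiableAt ℂ (fun Z : Fin p → Fin q → ℂ => Matrix.of Z i j) Z := fun Z i j => by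
    simp only [Matrix.of_apply]; fun_prop
  have hψd : DifferentiableOn ℂ ψ (typeIDomain p q) := fun Z hZ => by
    rw [mem_typeIDomain_iff] at hZ
    refine DifferentiableAt.differentiableWithinAt
      (differentiableAt_pi.2 fun i => differentiableAt_pi.2 fun j => ?_)
    have h1 : ∀ i j, DifferentiableAt ℂ (fun Z : Fin p → Fin q → ℂ => (Matrix.of Z - A) i j) Z :=
      fun i j => (hent Z i j).sub_const _
    have h2 : ∀ i j, DifferentiableAt ℂ
        (fun Z : Fin p → Fin q → ℂ => (1 - Aᴴ * Matrix.of Z : Matrix _ _ ℂ) i j) Z := fun i j =>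
      (DifferentiableAt.matrix_mul (M := fun _ => Aᴴ)
        (fun _ _ => differentiableAt_const _) (hent Z) i j).const_sub _
    have h3 := DifferentiableAt.matrix_mul (M := fun _ => S)
      (fun _ _ => differentiableAt_const _) h2
    have h4 := DifferentiableAt.matrix_inv h3 (det_moebius_denom_ne_zero hA hS0 hZ)
    exact DifferentiableAt.matrix_mul (DifferentiableAt.matrix_mul (M := fun _ => R)
      (fun _ _ => differentiableAt_const _) h1) h4 i j
  have hgd : DifferentiableOn ℂ g (typeIDomain p q) := fun Z hZ => by
    rw [mem_typeIDomain_iff] at hZ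
    refine DifferentiableAt.differentiableWithinAt
      (differentiableAt_pi.2 fun i => differentiableAt_pi.2 fun j => ?_)
    have h1 : ∀ i j, DifferentiableAt ℂ (fun Z : Fin p → Fin q → ℂ => (R⁻¹ * Matrix.of Z * S) i j) Z :=
      DifferentiableAt.matrix_mul (N := fun _ => S) (DifferentiableAt.matrix_mul (M := fun _ => R⁻¹)
        (fun _ _ => differentiableAt_const _) (hent Z)) (fun _ _ => differentiableAt_const _)
    have h2 : ∀ i j, DifferentiableAt ℂ
        (fun Z : Fin p → Fin q → ℂ => (1 + R⁻¹ * Matrix.of Z * S * Aᴴ : Matrix _ _ ℂ) i j) Z := fun i j =>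
      (DifferentiableAt.matrix_mul (N := fun _ => Aᴴ) h1
        (fun _ _ => differentiableAt_const _) i j).const_add _
    have h3 := DifferentiableAt.matrix_inv h2 (det_moebiusInv_denom_ne_zero hA hR hS hR0 hZ)
    have h4 : ∀ i j, DifferentiableAt ℂ
        (fun Z : Fin p → Fin q → ℂ => (R⁻¹ * Matrix.of Z * S + A) i j) Z := fun i j =>
      (h1 i j).add_const _
    exact DifferentiableAt.matrix_mul h3 h4 i j
  have hnorm : ∀ Z ∈ typeIDomain p q,
      normSq S.det * normSq (polNorm Z (star a)) * genNormI (ψ Z) = genNormI Z := fun Z hZ => by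
    have h := congr_arg Matrix.det (moebius_identity hA hR hS
      (moebius_mul_denom (R := R) hA hS0 (mem_typeIDomain_iff.1 hZ)))
    rw [det_mul, det_mul, det_conjTranspose, det_mul, hdetZ, ← Matrix.det_one_sub_mul_comm,
      ← Matrix.det_one_sub_mul_comm (Matrix.of Z)] at h
    have e1 : (1 - moebius A R S (Matrix.of Z) * (moebius A R S (Matrix.of Z))ᴴ).det
        = (genNormI (ψ Z) : ℂ) := by
      rw [← polNorm_star_self]; rfl
    have e2 : (1 - Matrix.of Z * (Matrix.of Z)ᴴ).det = (genNormI Z : ℂ) := by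
      rw [← polNorm_star_self]; rfl
    rw [e1, e2] at h
    apply Complex.ofReal_injective
    rw [← h]
    push_cast
    rw [← Complex.mul_conj, ← Complex.mul_conj, Complex.star_def, map_mul]
    ring
  refine ⟨ψ, ⟨hψd, hψm, g, hgd, hgm, fun Z hZ => ?_, fun Z hZ => ?_⟩, hψa, normSq S.det,
    normSq_pos.2 hS0, hnorm⟩
  · exact moebiusInv_moebius hA hR hS hR0 hS0 (mem_typeIDomain_iff.1 hZ)
  · exact moebius_moebiusInv hA hR hS hR0 hS0 (mem_typeIDomain_iff.1 hZ)

/-- The Möbius automorphisms move any point of the hypersurface `2 Re ω = log N(Z)` to the origin. -/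
lemma exists_isFibAut {a : Fin p → Fin q → ℂ} (ha : a ∈ typeIDomain p q) {ω : ℂ}
    (hω : 2 * ω.re = Real.log (genNormI a)) :
    ∃ ψ H, IsFibAut (p := p) (q := q) ψ H ∧ ψ a = 0 ∧ ω + H a = 0 ∧
      ∃ c : ℂ, ∀ Z ∈ typeIDomain p q, exp (H Z) * polNorm Z (star a) = c := by
  obtain ⟨L, hL, heL⟩ := exists_differentiableOn_log (isOpen_typeIDomain (p := p) (q := q))
    convex_typeIDomain ⟨0, zero_mem_typeIDomain⟩ (g := fun Z => polNorm Z (star a))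
    (fun Z _ => (DifferentiableAt.comp Z (g := fun P : (Fin p → Fin q → ℂ) × (Fin p → Fin q → ℂ) =>
      polNorm P.1 P.2) (f := fun Z => (Z, star a))
      (differentiable_polNorm _) (by fun_prop)).differentiableWithinAt)
    (fun Z hZ => polNorm_star_ne_zero hZ ha)
  obtain ⟨ψ, hψ, hψa, k, hk, hnorm⟩ := exists_biholo_moebius ha
  have hlog : ∀ Z ∈ typeIDomain p q, Real.log (genNormI (ψ Z)) =
      -2 * (L Z).re - Real.log k + Real.log (genNormI Z) := fun Z hZ => by
    have h2 := polNorm_star_ne_zero hZ ha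
    rw [← hnorm Z hZ, Real.log_mul (by simp [h2, hk.ne']) (genNormI_pos (hψ.2.1 hZ)).ne',
      Real.log_mul hk.ne' (by simpa using h2), ← heL Z hZ, normSq_eq_norm_sq,
      Real.log_pow, norm_exp, Real.log_exp]
    push_cast; ring
  have hre := hlog a ha
  rw [hψa, genNormI_zero, Real.log_one] at hre
  refine ⟨ψ, fun Z => L a - L Z - ω, ⟨hψ, (hL.const_sub _).sub_const _, fun Z hZ => ?_⟩, hψa,
    by ring, exp (L a - ω), fun Z hZ => ?_⟩
  · rw [hlog Z hZ, sub_re, sub_re]; linarith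
  · rw [← heL Z hZ, ← exp_add]; congr 1; ring

end TypeI

section Polarized

variable {p q : ℕ}

/-- The complex bilinear pairing `tr (X Yᵀ)` on matrices. -/
def dotE : (Fin p → Fin q → ℂ) →L[ℂ] (Fin p → Fin q → ℂ) →L[ℂ] ℂ :=
  ∑ i, ∑ j, (ContinuousLinearMap.mul ℂ ℂ).bilinearComp
    ((ContinuousLinearMap.proj (R := ℂ) (φ := fun _ : Fin q => ℂ) j).comp
      (ContinuousLinearMap.proj (R := ℂ) (φ := fun _ : Fin p => Fin q → ℂ) i))
    ((ContinuousLinearMap.proj (R := ℂ) (φ := fun _ : Fin q => ℂ) j).comp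
      (ContinuousLinearMap.proj (R := ℂ) (φ := fun _ : Fin p => Fin q → ℂ) i))

lemma dotE_apply (X Y : Fin p → Fin q → ℂ) : dotE X Y = ∑ i, ∑ j, X i j * Y i j := by
  simp [dotE]

lemma dotE_comm (X Y : Fin p → Fin q → ℂ) : dotE X Y = dotE Y X := by
  simp only [dotE_apply, mul_comm]

lemma dotE_single_left (i : Fin p) (j : Fin q) (c : ℂ) (Y : Fin p → Fin q → ℂ) :
    dotE (Pi.single i (Pi.single j c)) Y = c * Y i j := by
  rw [dotE_apply, Finset.sum_eq_single i, Finset.sum_eq_single j]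
  · simp
  · intro b _ hb; simp [Pi.single_eq_of_ne hb]
  · simp
  · intro b _ hb; simp [Pi.single_eq_of_ne hb]
  · simp

lemma eq_zero_of_dotE_eq_zero {Y : Fin p → Fin q → ℂ} (h : ∀ X, dotE X Y = 0) : Y = 0 := by
  ext i j
  have := h (Pi.single i (Pi.single j 1))
  rwa [dotE_single_left, one_mul] at this

lemma dotE_star_self_eq_zero {X : Fin p → Fin q → ℂ} (h : dotE X (star X) = 0) : X = 0 := by
  have e : dotE X (star X) = ((∑ i, ∑ j, ‖X i j‖ ^ 2 : ℝ) : ℂ) := by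
    rw [dotE_apply]
    push_cast
    refine Finset.sum_congr rfl fun i _ => Finset.sum_congr rfl fun j _ => ?_
    rw [Pi.star_apply, Pi.star_apply, Complex.star_def, Complex.mul_conj']
  rw [e, Complex.ofReal_eq_zero, Finset.sum_eq_zero_iff_of_nonneg (fun i _ => by positivity)] at h
  ext i j
  have h1 := h i (Finset.mem_univ i)
  rw [Finset.sum_eq_zero_iff_of_nonneg (fun i _ => by positivity)] at h1
  simpa using h1 j (Finset.mem_univ j)

lemma polNorm_comm (Z Y : Fin p → Fin q → ℂ) : polNorm Z Y = polNorm Y Z := by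
  rw [polNorm, ← det_transpose, polNorm]
  simp [transpose_sub, transpose_mul]

lemma polNorm_smul_left (t : ℂ) (Z Y : Fin p → Fin q → ℂ) : polNorm (t • Z) Y = polNorm Z (t • Y) := by
  have e1 : Matrix.of (t • Z) = t • Matrix.of Z := rfl
  have e2 : Matrix.of (t • Y) = t • Matrix.of Y := rfl
  rw [polNorm, polNorm, e1, e2, transpose_smul, Matrix.smul_mul, Matrix.mul_smul]

lemma exists_polNorm_smul (X Y : Fin p → Fin q → ℂ) :
    ∃ P : Polynomial ℂ, ∀ t : ℂ, polNorm (t • X) Y = 1 - t * dotE X Y + t ^ 2 * P.eval t := by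
  set M := Matrix.of X * (Matrix.of Y)ᵀ with hM
  have htr : M.trace = dotE X Y := by
    rw [dotE_apply, hM, Matrix.trace]
    simp [Matrix.mul_apply]
  refine ⟨(det (1 + (Polynomial.X : Polynomial ℂ) • M.map Polynomial.C)).divX.divX.comp
    (-Polynomial.X), fun t => ?_⟩
  have e1 : Matrix.of (t • X) = t • Matrix.of X := rfl
  rw [polNorm, e1, Matrix.smul_mul, sub_eq_add_neg, ← neg_smul, Matrix.det_one_add_smul, htr]
  simp only [Polynomial.eval_comp, Polynomial.eval_neg, Polynomial.eval_X]
  ring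

lemma hasDerivAt_polNorm_smul (X Y : Fin p → Fin q → ℂ) :
    HasDerivAt (fun t : ℂ => polNorm (t • X) Y) (-dotE X Y) 0 := by
  obtain ⟨P, e⟩ := exists_polNorm_smul X Y
  simp only [e]
  have h1 : HasDerivAt (fun t : ℂ => t) 1 0 := hasDerivAt_id 0
  have h3 := ((h1.mul_const (dotE X Y)).const_sub 1).add ((h1.pow 2).mul (P.hasDerivAt 0))
  exact h3.congr_deriv (by simp)

lemma differentiable_polNorm_left (Y : Fin p → Fin q → ℂ) : Differentiable ℂ fun Z => polNorm Z Y :=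
  fun Z => DifferentiableAt.comp Z (g := fun P : (Fin p → Fin q → ℂ) × (Fin p → Fin q → ℂ) =>
      polNorm P.1 P.2) (f := fun Z => (Z, Y)) (differentiable_polNorm _) (by fun_prop)

lemma hasFDerivAt_polNorm_left (Y : Fin p → Fin q → ℂ) :
    HasFDerivAt (fun Z => polNorm Z Y) (-(dotE.flip Y)) 0 := by
  have h := (differentiable_polNorm_left Y 0).hasFDerivAt
  suffices -(dotE.flip Y) = fderiv ℂ (fun Z => polNorm Z Y) 0 by rwa [this]
  ext1 X
  have h1 : HasDerivAt (fun t : ℂ => t • X) X 0 := by simpa using (hasDerivAt_id (0:ℂ)).smul_const X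
  have h2 := HasFDerivAt.comp_hasDerivAt_of_eq (0 : ℂ) h h1 (by simp)
  simpa using (hasDerivAt_polNorm_smul X Y).unique h2

/-- The logarithm of the polarized generic norm. -/
def polLog (Z Y : Fin p → Fin q → ℂ) : ℂ := Complex.log (polNorm Z Y)

lemma polLog_comm (Z Y : Fin p → Fin q → ℂ) : polLog Z Y = polLog Y Z := by
  rw [polLog, polNorm_comm, polLog]

@[simp] lemma polLog_zero_left (Y : Fin p → Fin q → ℂ) : polLog 0 Y = 0 := by
  rw [polLog, polNorm_zero_left, log_one]

@[simp] lemma polLog_zero_right (Y : Fin p → Fin q → ℂ) : polLog Y 0 = 0 := by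
  rw [polLog, polNorm_zero_right, log_one]

lemma polLog_star_self {Z : Fin p → Fin q → ℂ} (hZ : Z ∈ typeIDomain p q) :
    polLog Z (star Z) = (Real.log (genNormI Z) : ℂ) := by
  rw [polLog, polNorm_star_self, ofReal_log (genNormI_pos hZ).le]

lemma eventually_polNorm_mem_slitPlane :
    ∀ᶠ x in 𝓝 (0 : (Fin p → Fin q → ℂ) × (Fin p → Fin q → ℂ)), polNorm x.1 x.2 ∈ slitPlane := by
  have h := (differentiable_polNorm (p := p) (q := q)).continuous.tendsto 0
  simp only [Prod.fst_zero, polNorm_zero_left] at h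
  exact h.eventually (isOpen_slitPlane.mem_nhds one_mem_slitPlane)

lemma eventually_differentiableAt_polLog :
    ∀ᶠ x in 𝓝 (0 : (Fin p → Fin q → ℂ) × (Fin p → Fin q → ℂ)),
      DifferentiableAt ℂ (fun x : (Fin p → Fin q → ℂ) × (Fin p → Fin q → ℂ) => polLog x.1 x.2) x :=
  eventually_polNorm_mem_slitPlane.mono fun x hx => (differentiable_polNorm x).clog hx

lemma tendsto_polLog :
    Tendsto (fun x : (Fin p → Fin q → ℂ) × (Fin p → Fin q → ℂ) => polLog x.1 x.2) (𝓝 0) (𝓝 0) := by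
  have := (eventually_differentiableAt_polLog (p := p) (q := q)).self_of_nhds.continuousAt.tendsto
  simpa using this

/-- The hypersurface `2 Re ω = log N(Z)` over the type I domain. -/
def logBundle (p q : ℕ) : Set ((Fin p → Fin q → ℂ) × ℂ) :=
  {P | P.1 ∈ typeIDomain p q ∧ 2 * P.2.re = Real.log (genNormI P.1)}

/-- A holomorphic map of `(Z, ω, Y)` that vanishes when `(Z, ω)` lies on the hypersurface
`2 Re ω = log N(Z)` and `Y = star Z` vanishes identically. -/
lemma eventually_eq_zero_of_logBundle {W : Type*} [NormedAddCommGroup W] [NormedSpace ℂ W]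
    [CompleteSpace W] {K : (Fin p → Fin q → ℂ) × ℂ × (Fin p → Fin q → ℂ) → W}
    (hK : ∀ᶠ x in 𝓝 0, DifferentiableAt ℂ K x)
    (h : ∀ᶠ P in 𝓝 (0 : (Fin p → Fin q → ℂ) × ℂ), P ∈ logBundle p q → K (P.1, P.2, star P.1) = 0) :
    ∀ᶠ x in 𝓝 0, K x = 0 := by
  let T : ((Fin p → Fin q → ℂ) × ℂ) × ((Fin p → Fin q → ℂ) × ℂ) →
      (Fin p → Fin q → ℂ) × ℂ × (Fin p → Fin q → ℂ) :=
    fun x => (x.1.1, 2⁻¹ * polLog x.1.1 x.2.1 + 2⁻¹ * (x.1.2 - x.2.2), x.2.1)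
  have hπ : Tendsto (fun x : ((Fin p → Fin q → ℂ) × ℂ) × ((Fin p → Fin q → ℂ) × ℂ) =>
      (x.1.1, x.2.1)) (𝓝 0) (𝓝 0) := by
    have : Continuous (fun x : ((Fin p → Fin q → ℂ) × ℂ) × ((Fin p → Fin q → ℂ) × ℂ) =>
      (x.1.1, x.2.1)) := by fun_prop
    exact this.tendsto' 0 0 rfl
  have hTd : ∀ᶠ x in 𝓝 0, DifferentiableAt ℂ T x := by
    filter_upwards [hπ.eventually eventually_differentiableAt_polLog] with x hx
    have h1 : DifferentiableAt ℂ (fun x : ((Fin p → Fin q → ℂ) × ℂ) × ((Fin p → Fin q → ℂ) × ℂ) =>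
        polLog x.1.1 x.2.1) x := hx.comp x (f := fun x => (x.1.1, x.2.1)) (by fun_prop)
    fun_prop
  have hT0 : T 0 = 0 := by simp [T]
  have hTt : Tendsto T (𝓝 0) (𝓝 0) := by
    simpa only [hT0] using hTd.self_of_nhds.continuousAt.tendsto
  have hKT : ∀ᶠ x in 𝓝 0, K (T x) = 0 := by
    refine eventually_eq_zero_of_polarization (K := fun x => K (T x)) ?_ ?_
    · filter_upwards [hTt.eventually hK, hTd] with x h1 h2
      exact h1.comp x h2
    · have hs : Tendsto (fun z : (Fin p → Fin q → ℂ) × ℂ => (z, star z)) (𝓝 0) (𝓝 0) := by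
        have : Continuous (fun z : (Fin p → Fin q → ℂ) × ℂ => (z, star z)) := by fun_prop
        exact this.tendsto' 0 0 (by simp)
      have hpr : Tendsto (fun x : (Fin p → Fin q → ℂ) × ℂ × (Fin p → Fin q → ℂ) => (x.1, x.2.1))
          (𝓝 0) (𝓝 0) := by
        have : Continuous (fun x : (Fin p → Fin q → ℂ) × ℂ × (Fin p → Fin q → ℂ) => (x.1, x.2.1)) := by
          fun_prop
        exact this.tendsto' 0 0 rfl
      have hfst : ∀ᶠ z in 𝓝 (0 : (Fin p → Fin q → ℂ) × ℂ), z.1 ∈ typeIDomain p q :=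
        continuous_fst.continuousAt.eventually (isOpen_typeIDomain.mem_nhds zero_mem_typeIDomain)
      filter_upwards [(hpr.comp (hTt.comp hs)).eventually h, hfst] with z hz hz1
      refine hz ⟨hz1, ?_⟩
      simp only [T, Function.comp_apply, Prod.fst_star, Prod.snd_star]
      rw [polLog_star_self hz1]
      simp
  let S : (Fin p → Fin q → ℂ) × ℂ × (Fin p → Fin q → ℂ) →
      ((Fin p → Fin q → ℂ) × ℂ) × ((Fin p → Fin q → ℂ) × ℂ) := fun x =>
    ((x.1, x.2.1 - 2⁻¹ * polLog x.1 x.2.2), (x.2.2, -(x.2.1 - 2⁻¹ * polLog x.1 x.2.2)))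
  have hS : Tendsto S (𝓝 0) (𝓝 0) := by
    have hc : Tendsto (fun x : (Fin p → Fin q → ℂ) × ℂ × (Fin p → Fin q → ℂ) => (x.1, x.2.2))
        (𝓝 0) (𝓝 0) := by
      have : Continuous (fun x : (Fin p → Fin q → ℂ) × ℂ × (Fin p → Fin q → ℂ) => (x.1, x.2.2)) := by
        fun_prop
      exact this.tendsto' 0 0 rfl
    have hl : ContinuousAt (fun x : (Fin p → Fin q → ℂ) × ℂ × (Fin p → Fin q → ℂ) =>
        polLog x.1 x.2.2) 0 := by
      have := tendsto_polLog.comp hc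
      unfold ContinuousAt
      simpa [Function.comp_def] using this
    have : ContinuousAt S 0 := by fun_prop
    have h0 : S 0 = 0 := by simp [S]
    rwa [ContinuousAt, h0] at this
  filter_upwards [hS.eventually hKT] with x hx
  have : T (S x) = x := by
    simp only [T, S]
    refine Prod.ext rfl (Prod.ext ?_ rfl)
    simp only
    ring
  rwa [this] at hx

end Polarized

/-- The space of `p × q` complex matrices. -/
abbrev MatE (p q : ℕ) := Fin p → Fin q → ℂ

section PolPair

variable {p q : ℕ}

lemma tendsto_polLog_of {α : Type*} {l : Filter α} {f g : α → MatE p q}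
    (hf : Tendsto f l (𝓝 0)) (hg : Tendsto g l (𝓝 0)) :
    Tendsto (fun a => polLog (f a) (g a)) l (𝓝 0) := by
  have h : Tendsto (fun a => (f a, g a)) l (𝓝 (0 : MatE p q × MatE p q)) := hf.prodMk_nhds hg
  have h1 := Tendsto.comp (g := fun x : MatE p q × MatE p q => polLog x.1 x.2) tendsto_polLog h
  exact h1

lemma hasFDerivAt_polLog_left (Y : MatE p q) :
    HasFDerivAt (fun Z => polLog Z Y) (-(dotE.flip Y)) 0 := by
  have h := (hasFDerivAt_polNorm_left Y).clog (by
    rw [polNorm_zero_left]; exact one_mem_slitPlane)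
  rwa [polNorm_zero_left, inv_one, one_smul] at h

/-- Two germs of holomorphic maps fixing the origin that together preserve the complexification
of the hypersurface `2 Re ω = log N(Z)`. -/
structure IsPolPair (F F' : MatE p q × ℂ → MatE p q × ℂ) : Prop where
  diff : ∀ᶠ x in 𝓝 0, DifferentiableAt ℂ F x
  diff' : ∀ᶠ x in 𝓝 0, DifferentiableAt ℂ F' x
  map_zero : F 0 = 0
  map_zero' : F' 0 = 0
  eq : ∀ᶠ x in 𝓝 (0 : MatE p q × ℂ × MatE p q),
    (F (x.1, x.2.1)).2 + (F' (x.2.2, polLog x.1 x.2.2 - x.2.1)).2 =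
      polLog (F (x.1, x.2.1)).1 (F' (x.2.2, polLog x.1 x.2.2 - x.2.1)).1

/-- The conjugate of a map. -/
def starMap (F : MatE p q × ℂ → MatE p q × ℂ) : MatE p q × ℂ → MatE p q × ℂ :=
  fun x => star (F (star x))

/-- The derivative at the origin of the base component in the base directions. -/
def linPart (F : MatE p q × ℂ → MatE p q × ℂ) : MatE p q →L[ℂ] MatE p q :=
  (ContinuousLinearMap.fst ℂ (MatE p q) ℂ).comp
    ((fderiv ℂ F 0).comp (ContinuousLinearMap.inl ℂ (MatE p q) ℂ))

/-- The derivative at the origin of the base component in the fibre direction. -/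
def vertPart (F : MatE p q × ℂ → MatE p q × ℂ) : MatE p q := (fderiv ℂ F 0 (0, 1)).1

/-- The derivative at the origin of the fibre component in the fibre direction. -/
def scalPart (F : MatE p q × ℂ → MatE p q × ℂ) : ℂ := (fderiv ℂ F 0 (0, 1)).2

lemma linPart_apply (F : MatE p q × ℂ → MatE p q × ℂ) (X : MatE p q) :
    linPart F X = (fderiv ℂ F 0 (X, 0)).1 := rfl

lemma tendsto_starMap_zero : Tendsto (star : MatE p q × ℂ → MatE p q × ℂ) (𝓝 0) (𝓝 0) :=
  continuous_star.tendsto' 0 0 (star_zero _)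

lemma isPolPair_starMap {F : MatE p q × ℂ → MatE p q × ℂ}
    (hd : ∀ᶠ x in 𝓝 0, DifferentiableAt ℂ F x) (h0 : F 0 = 0)
    (hM : ∀ᶠ x in 𝓝 0, x ∈ logBundle p q → F x ∈ logBundle p q) : IsPolPair F (starMap F) := by
  have hd' : ∀ᶠ x in 𝓝 0, DifferentiableAt ℂ (starMap F) x := by
    filter_upwards [tendsto_starMap_zero.eventually hd] with x hx
    have := hx.star_star
    rwa [star_star] at this
  have h0' : starMap F 0 = 0 := by simp [starMap, h0]
  refine ⟨hd, hd', h0, h0', ?_⟩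
  let a : MatE p q × ℂ × MatE p q → MatE p q × ℂ := fun x => (x.1, x.2.1)
  let b : MatE p q × ℂ × MatE p q → MatE p q × ℂ := fun x => (x.2.2, polLog x.1 x.2.2 - x.2.1)
  have hc1 : Continuous fun x : MatE p q × ℂ × MatE p q => (x.1, x.2.2) := by fun_prop
  have ht1 := hc1.tendsto' 0 0 rfl
  have ha : Tendsto a (𝓝 0) (𝓝 0) := by
    have : Continuous a := by fun_prop
    exact this.tendsto' 0 0 rfl
  have hbd : ∀ᶠ x in 𝓝 0, DifferentiableAt ℂ b x := by
    filter_upwards [ht1.eventually eventually_differentiableAt_polLog] with x hx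
    have h1 : DifferentiableAt ℂ (fun x : MatE p q × ℂ × MatE p q => polLog x.1 x.2.2) x :=
      hx.comp x (f := fun x : MatE p q × ℂ × MatE p q => (x.1, x.2.2)) (by fun_prop)
    fun_prop
  have hb : Tendsto b (𝓝 0) (𝓝 0) := by
    have h0 : b 0 = 0 := by simp [b]
    simpa only [h0] using hbd.self_of_nhds.continuousAt.tendsto
  have hFa : Tendsto (fun x => F (a x)) (𝓝 0) (𝓝 0) := by
    have : Tendsto F (𝓝 0) (𝓝 0) := by simpa [h0] using hd.self_of_nhds.continuousAt.tendsto
    exact this.comp ha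
  have hFb : Tendsto (fun x => starMap F (b x)) (𝓝 0) (𝓝 0) := by
    have : Tendsto (starMap F) (𝓝 0) (𝓝 0) := by
      simpa [h0'] using hd'.self_of_nhds.continuousAt.tendsto
    exact this.comp hb
  have hpair : Tendsto (fun x => ((F (a x)).1, (starMap F (b x)).1)) (𝓝 0) (𝓝 0) :=
    ((continuous_fst.tendsto' _ _ rfl).comp hFa).prodMk_nhds
      ((continuous_fst.tendsto' _ _ rfl).comp hFb)
  have key := eventually_eq_zero_of_logBundle
    (K := fun x => (F (a x)).2 + (starMap F (b x)).2 - polLog (F (a x)).1 (starMap F (b x)).1) ?_ ?_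
  · exact key.mono fun x hx => sub_eq_zero.1 hx
  · filter_upwards [ha.eventually hd, hb.eventually hd', hbd,
      hpair.eventually eventually_differentiableAt_polLog] with x h1 h2 h3 h4
    have h5 : DifferentiableAt ℂ (fun x => F (a x)) x := h1.comp x (f := a) (by fun_prop)
    have h6 : DifferentiableAt ℂ (fun x => starMap F (b x)) x := h2.comp x h3
    have h7 : DifferentiableAt ℂ (fun x => polLog (F (a x)).1 (starMap F (b x)).1) x :=
      h4.comp x (f := fun x => ((F (a x)).1, (starMap F (b x)).1)) (h5.fst.prodMk h6.fst)
    exact (h5.snd.add h6.snd).sub h7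
  · filter_upwards [hM] with P hP hPM
    have h1 : b (P.1, P.2, star P.1) = star P := by
      refine Prod.ext rfl ?_
      simp only [b, polLog_star_self hPM.1, ← hPM.2]
      apply Complex.ext
      · simp; ring
      · simp
    have h2 := hP hPM
    simp only [h1, a, starMap, star_star, Prod.mk.eta, Prod.fst_star, Prod.snd_star,
      polLog_star_self h2.1, ← h2.2, Complex.star_def, Complex.add_conj]
    simp

namespace IsPolPair

variable {F F' : MatE p q × ℂ → MatE p q × ℂ}

lemma tendsto (h : IsPolPair F F') : Tendsto F (𝓝 0) (𝓝 0) := by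
  simpa [h.map_zero] using h.diff.self_of_nhds.continuousAt.tendsto

lemma symm (h : IsPolPair F F') : IsPolPair F' F := by
  refine ⟨h.diff', h.diff, h.map_zero', h.map_zero, ?_⟩
  have ht : Tendsto (fun x : MatE p q × ℂ × MatE p q => (x.2.2, polLog x.1 x.2.2 - x.2.1, x.1))
      (𝓝 0) (𝓝 0) := by
    have h1 : Tendsto (fun x : MatE p q × ℂ × MatE p q => x.1) (𝓝 0) (𝓝 0) :=
      continuous_fst.tendsto' _ _ rfl
    have h2 : Tendsto (fun x : MatE p q × ℂ × MatE p q => x.2.1) (𝓝 0) (𝓝 0) :=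
      (continuous_fst.comp continuous_snd).tendsto' _ _ rfl
    have h3 : Tendsto (fun x : MatE p q × ℂ × MatE p q => x.2.2) (𝓝 0) (𝓝 0) :=
      (continuous_snd.comp continuous_snd).tendsto' _ _ rfl
    exact h3.prodMk_nhds ((by simpa using (tendsto_polLog_of h1 h3).sub h2 :
      Tendsto (fun x : MatE p q × ℂ × MatE p q => polLog x.1 x.2.2 - x.2.1) (𝓝 0)
        (𝓝 0)).prodMk_nhds h1)
  filter_upwards [ht.eventually h.eq] with x hx
  simp only [polLog_comm x.2.2 x.1, sub_sub_cancel] at hx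
  rw [add_comm, hx, polLog_comm]

lemma eventually_snd_eq_zero (h : IsPolPair F F') : ∀ᶠ Z in 𝓝 (0 : MatE p q), (F (Z, 0)).2 = 0 := by
  have ht : Tendsto (fun Z : MatE p q => (Z, (0 : ℂ), (0 : MatE p q))) (𝓝 0) (𝓝 0) := by
    have : Continuous (fun Z : MatE p q => (Z, (0 : ℂ), (0 : MatE p q))) := by fun_prop
    exact this.tendsto' 0 0 rfl
  filter_upwards [ht.eventually h.eq] with Z hZ
  have e : ((0 : MatE p q), (0 : ℂ)) = 0 := rfl
  simpa [e, h.map_zero'] using hZ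

lemma hasFDerivAt (h : IsPolPair F F') : HasFDerivAt F (fderiv ℂ F 0) 0 :=
  h.diff.self_of_nhds.hasFDerivAt

lemma hasFDerivAt_fst_inl (h : IsPolPair F F') :
    HasFDerivAt (fun Z => (F (Z, 0)).1) (linPart F) 0 := by
  have h1 : HasFDerivAt (fun Z : MatE p q => (Z, (0 : ℂ)))
      (ContinuousLinearMap.inl ℂ (MatE p q) ℂ) 0 :=
    (ContinuousLinearMap.inl ℂ (MatE p q) ℂ).hasFDerivAt
  exact (HasFDerivAt.comp (0 : MatE p q) (f := fun Z : MatE p q => (Z, (0 : ℂ)))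
    (g := F) h.hasFDerivAt h1).fst

lemma fderiv_inl_snd (h : IsPolPair F F') (X : MatE p q) : (fderiv ℂ F 0 (X, 0)).2 = 0 := by
  have h1 : HasFDerivAt (fun Z : MatE p q => (Z, (0 : ℂ)))
      (ContinuousLinearMap.inl ℂ (MatE p q) ℂ) 0 :=
    (ContinuousLinearMap.inl ℂ (MatE p q) ℂ).hasFDerivAt
  have h2 := (HasFDerivAt.comp (0 : MatE p q) (f := fun Z : MatE p q => (Z, (0 : ℂ)))
    (g := F) h.hasFDerivAt h1).snd
  have h3 : HasFDerivAt (fun _ : MatE p q => (0 : ℂ)) (0 : MatE p q →L[ℂ] ℂ) 0 :=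
    hasFDerivAt_const _ _
  have h4 := h2.unique (h3.congr_of_eventuallyEq h.eventually_snd_eq_zero)
  have := congrArg (fun L => L X) h4
  simpa using this

lemma fderiv_apply (h : IsPolPair F F') (X : MatE p q) (c : ℂ) :
    fderiv ℂ F 0 (X, c) = (linPart F X + c • vertPart F, c * scalPart F) := by
  have e : (X, c) = (X, (0 : ℂ)) + c • ((0 : MatE p q), (1 : ℂ)) := by simp
  rw [e, map_add, map_smul]
  refine Prod.ext rfl ?_
  simp [h.fderiv_inl_snd, scalPart]

lemma eventually_exp_snd (h : IsPolPair F F') :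
    ∀ᶠ x in 𝓝 (0 : MatE p q × MatE p q), cexp (F (x.1, polLog x.1 x.2)).2 =
      polNorm (F (x.1, polLog x.1 x.2)).1 (F' (x.2, 0)).1 := by
  have h1 : Tendsto (fun x : MatE p q × MatE p q => x.1) (𝓝 0) (𝓝 0) :=
    continuous_fst.tendsto' _ _ rfl
  have h2 : Tendsto (fun x : MatE p q × MatE p q => x.2) (𝓝 0) (𝓝 0) :=
    continuous_snd.tendsto' _ _ rfl
  have hF : Tendsto (fun x : MatE p q × MatE p q => (F (x.1, polLog x.1 x.2)).1) (𝓝 0) (𝓝 0) :=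
    (continuous_fst.tendsto' _ _ rfl).comp
      (h.tendsto.comp (h1.prodMk_nhds (tendsto_polLog_of h1 h2)))
  have hF' : Tendsto (fun x : MatE p q × MatE p q => (F' (x.2, 0)).1) (𝓝 0) (𝓝 0) :=
    (continuous_fst.tendsto' _ _ rfl).comp (h.symm.tendsto.comp (h2.prodMk_nhds tendsto_const_nhds))
  have ht := h1.prodMk_nhds ((tendsto_polLog_of h1 h2).prodMk_nhds h2)
  filter_upwards [ht.eventually h.eq, h2.eventually h.symm.eventually_snd_eq_zero,
    (hF.prodMk_nhds hF').eventually eventually_polNorm_mem_slitPlane] with x hx hx0 hs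
  simp only [sub_self, hx0, add_zero] at hx
  rw [hx, polLog, Complex.exp_log (slitPlane_ne_zero hs)]

lemma eventually_dotE_linPart (h : IsPolPair F F') :
    ∀ᶠ Y in 𝓝 (0 : MatE p q), ∀ X, dotE (linPart F X) (F' (Y, 0)).1 =
      (scalPart F + dotE (vertPart F) (F' (Y, 0)).1) * dotE X Y := by
  have hsw : Tendsto (Prod.swap : MatE p q × MatE p q → _) (𝓝 0) (𝓝 0) :=
    continuous_swap.tendsto' _ _ rfl
  have h2 : ∀ᶠ x in 𝓝 (0 : MatE p q) ×ˢ 𝓝 (0 : MatE p q),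
      cexp (F (x.2, polLog x.2 x.1)).2 = polNorm (F (x.2, polLog x.2 x.1)).1 (F' (x.1, 0)).1 := by
    have := hsw.eventually h.eventually_exp_snd
    rw [← nhds_prod_eq]; exact this
  filter_upwards [h2.curry] with Y hY X
  have hg : HasFDerivAt (fun Z => (Z, polLog Z Y))
      ((ContinuousLinearMap.id ℂ (MatE p q)).prod (-(dotE.flip Y))) 0 :=
    (hasFDerivAt_id _).prodMk (hasFDerivAt_polLog_left Y)
  have hF0 : HasFDerivAt F (fderiv ℂ F 0) ((0 : MatE p q), polLog 0 Y) := by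
    rw [polLog_zero_left]; exact h.hasFDerivAt
  have e0 : F ((0 : MatE p q), polLog 0 Y) = 0 := by
    rw [polLog_zero_left]; exact h.map_zero
  have hF := HasFDerivAt.comp (0 : MatE p q) (f := fun Z : MatE p q => (Z, polLog Z Y)) hF0 hg
  have hl := hF.snd.cexp
  have hr : HasFDerivAt (fun Z => polNorm Z (F' (Y, 0)).1) (-(dotE.flip (F' (Y, 0)).1))
      (F ((0 : MatE p q), polLog 0 Y)).1 := by
    rw [e0]; exact hasFDerivAt_polNorm_left _
  have hr' := HasFDerivAt.comp (0 : MatE p q) hr hF.fst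
  have := congrArg (fun L => L X) (hl.unique (hr'.congr_of_eventuallyEq hY))
  have e1 : ((0 : MatE p q), (0 : ℂ)) = 0 := rfl
  simp [e1, h.map_zero, h.fderiv_apply] at this
  linear_combination this

lemma dotE_linPart_linPart (h : IsPolPair F F') (X X' : MatE p q) :
    dotE (linPart F X) (linPart F' X') = scalPart F * dotE X X' := by
  have hy := h.symm.hasFDerivAt_fst_inl
  have h1 := (dotE (linPart F X)).hasFDerivAt.comp (0 : MatE p q) hy
  have h2 := ((dotE (vertPart F)).hasFDerivAt.comp (0 : MatE p q) hy).const_add (scalPart F)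
  have h3 := h2.mul (dotE X).hasFDerivAt
  have h4 := congrArg (fun L => L X') (h1.unique (h3.congr_of_eventuallyEq
    (h.eventually_dotE_linPart.mono fun Y hY => hY X)))
  have e : ((0 : MatE p q), (0 : ℂ)) = 0 := rfl
  simpa [e, h.map_zero'] using h4

lemma scalPart_eq (h : IsPolPair F F') (i : Fin p) (j : Fin q) : scalPart F = scalPart F' := by
  let X : MatE p q := Pi.single i (Pi.single j 1)
  have h1 := h.dotE_linPart_linPart X X
  have h2 := h.symm.dotE_linPart_linPart X X
  have h3 : dotE X X = 1 := by simp [X, dotE_single_left]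
  rw [dotE_comm, h2, h3, mul_one, mul_one] at h1
  exact h1.symm

end IsPolPair

end PolPair

section VertPart

variable {p q : ℕ}

lemma polNorm_single_sub_single {i j : Fin p} {a b : Fin q} (hij : i ≠ j) (hab : a ≠ b)
    {c : ℂ} (hc : c ^ 2 = 1) (t τ : ℂ) :
    polNorm (t • (Pi.single i (Pi.single a c) - Pi.single j (Pi.single b 1)) : MatE p q)
      (τ • (Pi.single i (Pi.single a 1) + Pi.single j (Pi.single b c)) : MatE p q) =
      1 - t ^ 2 * τ ^ 2 := by
  have e1 : Matrix.of (t • (Pi.single i (Pi.single a c) - Pi.single j (Pi.single b 1)) : MatE p q) =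
      t • (Matrix.single i a c - Matrix.single j b 1) := by
    simp only [Matrix.single_eq_of_single_single]; rfl
  have e2 : Matrix.of (τ • (Pi.single i (Pi.single a 1) + Pi.single j (Pi.single b c)) : MatE p q) =
      τ • (Matrix.single i a 1 + Matrix.single j b c) := by
    simp only [Matrix.single_eq_of_single_single]; rfl
  have e : (1 - (t • (Matrix.single i a c - Matrix.single j b 1 : Matrix (Fin p) (Fin q) ℂ)) *
      (τ • (Matrix.single i a 1 + Matrix.single j b c : Matrix (Fin p) (Fin q) ℂ))ᵀ) =
      Matrix.diagonal (fun k => if k = i then 1 - t * τ * c else if k = j then 1 + t * τ * c else 1) := by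
    rw [transpose_smul, transpose_add, transpose_single, transpose_single, Matrix.smul_mul,
      Matrix.mul_smul, Matrix.sub_mul, Matrix.mul_add, Matrix.mul_add, single_mul_single_same, single_mul_single_same,
      single_mul_single_of_ne _ _ _ _ hab, single_mul_single_of_ne _ _ _ _ hab.symm]
    ext k l
    by_cases hkl : k = l
    · subst hkl
      by_cases h1 : k = i
      · subst h1
        simp [hij.symm]
        ring
      · by_cases h2 : k = j
        · subst h2
          simp [h1, Ne.symm h1]
          ring
        · simp [h1, Ne.symm h1, h2, Ne.symm h2]
    · have h1 : ¬ (i = k ∧ i = l) := fun h => hkl (h.1.symm.trans h.2)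
      have h2 : ¬ (j = k ∧ j = l) := fun h => hkl (h.1.symm.trans h.2)
      simp [hkl, h1, h2]
  rw [polNorm, e1, e2, e, det_diagonal, Fintype.prod_eq_mul i j hij (fun x hx => by simp [hx.1, hx.2])]
  simp [hij.symm]
  linear_combination (-(t ^ 2 * τ ^ 2)) * hc

namespace IsPolPair

variable {F F' : MatE p q × ℂ → MatE p q × ℂ}

lemma linPart_bijective (h : IsPolPair F F') (hγ : scalPart F ≠ 0) :
    Function.Bijective (linPart F) := by
  have hinj : Function.Injective (linPart F : MatE p q →ₗ[ℂ] MatE p q) := by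
    rw [injective_iff_map_eq_zero]
    intro X hX
    refine eq_zero_of_dotE_eq_zero fun X' => ?_
    have h1 := h.dotE_linPart_linPart X X'
    have hX' : linPart F X = 0 := hX
    rw [hX', _root_.map_zero, _root_.zero_apply] at h1
    rw [dotE_comm]
    exact (mul_eq_zero.1 h1.symm).resolve_left hγ
  exact ⟨hinj, LinearMap.injective_iff_surjective.1 hinj⟩

lemma eventually_fst_eq (h : IsPolPair F F') (hγ : scalPart F ≠ 0) {U : MatE p q}
    (hU : linPart F U = vertPart F) :
    ∀ᶠ Y in 𝓝 (0 : MatE p q), 1 - dotE U Y ≠ 0 ∧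
      (F' (Y, 0)).1 = (1 - dotE U Y)⁻¹ • linPart F' Y ∧
      scalPart F + dotE (vertPart F) (F' (Y, 0)).1 = scalPart F * (1 - dotE U Y)⁻¹ := by
  filter_upwards [h.eventually_dotE_linPart] with Y hY
  have h1 := hY U
  rw [hU] at h1
  have h2 : (scalPart F + dotE (vertPart F) (F' (Y, 0)).1) * (1 - dotE U Y) = scalPart F := by
    linear_combination h1
  have h3 : 1 - dotE U Y ≠ 0 := fun h0 => hγ (by rw [← h2, h0, mul_zero])
  have h4 : scalPart F + dotE (vertPart F) (F' (Y, 0)).1 = scalPart F * (1 - dotE U Y)⁻¹ := by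
    rw [← div_eq_mul_inv, eq_div_iff h3, h2]
  refine ⟨h3, ?_, h4⟩
  rw [← sub_eq_zero]
  refine eq_zero_of_dotE_eq_zero fun X' => ?_
  obtain ⟨X, rfl⟩ := (h.linPart_bijective hγ).2 X'
  rw [map_sub, map_smul, hY X, h.dotE_linPart_linPart, h4, smul_eq_mul]
  ring

/-- The fibre component of the polarized identity along a fixed conjugate variable. -/
lemma hasStrictFDerivAt_defect (h : IsPolPair F F') (Y : MatE p q) :
    ∃ L : MatE p q × ℂ →L[ℂ] ℂ,
      HasStrictFDerivAt (fun x => cexp (F x).2 - polNorm (F x).1 Y) L 0 ∧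
      ∀ c, L (0, c) = c * (scalPart F + dotE (vertPart F) Y) := by
  have hd : ∀ᶠ x in 𝓝 0, DifferentiableAt ℂ (fun x => cexp (F x).2 - polNorm (F x).1 Y) x := by
    filter_upwards [h.diff] with x hx
    have h1 : DifferentiableAt ℂ (fun x => polNorm (F x).1 Y) x :=
      (differentiable_polNorm_left Y _).comp x hx.fst
    exact hx.snd.cexp.sub h1
  refine ⟨_, hasStrictFDerivAt_of_eventually hd, fun c => ?_⟩
  have hF := h.hasFDerivAt
  have hr : HasFDerivAt (fun Z => polNorm Z Y) (-(dotE.flip Y)) (F 0).1 := by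
    rw [h.map_zero]; exact hasFDerivAt_polNorm_left _
  have h2 := hF.snd.cexp.sub (HasFDerivAt.comp (0 : MatE p q × ℂ) hr hF.fst)
  have h3 := h2.fderiv
  have h4 : fderiv ℂ (fun x => cexp (F x).2 - polNorm (F x).1 Y) 0 = _ := h3
  rw [h4]
  simp [h.map_zero, h.fderiv_apply]
  ring

lemma dotE_eq_zero_of_polNorm (h : IsPolPair F F') (hγ : scalPart F ≠ 0) (hγ' : scalPart F' ≠ 0)
    {X P U : MatE p q} (hXP : ∀ t τ : ℂ, polNorm (t • X) (τ • P) = 1 - t ^ 2 * τ ^ 2)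
    (hU : linPart F U = vertPart F) : dotE U P = 0 := by
  have hd : dotE X P = 0 := by
    have h1 := hasDerivAt_polNorm_smul X P
    have h2 : (fun t : ℂ => polNorm (t • X) P) = fun t => 1 - t ^ 2 := by
      funext t
      simpa using hXP t 1
    rw [h2] at h1
    have h3 : HasDerivAt (fun t : ℂ => 1 - t ^ 2) (-(2 * 0 ^ 1 * 1)) 0 := by
      simpa using ((hasDerivAt_id (0:ℂ)).pow 2).const_sub 1
    simpa using h1.unique h3
  obtain ⟨U', hU'⟩ := (h.symm.linPart_bijective hγ').2 (vertPart F')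
  obtain ⟨Q, hQ⟩ := exists_polNorm_smul (linPart F X) (linPart F' P)
  rw [h.dotE_linPart_linPart, hd] at hQ
  set u := dotE U P
  set κ := dotE U' X
  have hsw : Tendsto (Prod.swap : MatE p q × MatE p q → _) (𝓝 0) (𝓝 0) :=
    continuous_swap.tendsto' _ _ rfl
  have hexp : ∀ᶠ x in 𝓝 (0 : MatE p q) ×ˢ 𝓝 (0 : MatE p q),
      cexp (F (x.2, polLog x.2 x.1)).2 = polNorm (F (x.2, polLog x.2 x.1)).1 (F' (x.1, 0)).1 := by
    have := hsw.eventually h.eventually_exp_snd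
    rw [← nhds_prod_eq]; exact this
  have htP : ∀ P : MatE p q, Tendsto (fun τ : ℂ => τ • P) (𝓝 0) (𝓝 0) := fun P => by
    have : Continuous (fun τ : ℂ => τ • P) := by fun_prop
    exact this.tendsto' 0 0 (zero_smul _ _)
  have key : ∀ᶠ τ in 𝓝[≠] (0 : ℂ), Q.eval 0 = -(scalPart F * (1 - τ * u)) := by
    filter_upwards [((htP P).eventually hexp.curry).filter_mono nhdsWithin_le_nhds,
      ((htP P).eventually (h.eventually_fst_eq hγ hU)).filter_mono nhdsWithin_le_nhds,
      self_mem_nhdsWithin] with τ h1 h2 hτ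
    have hτ0 : τ ≠ 0 := hτ
    obtain ⟨hu, hy, hθ⟩ := h2
    rw [map_smul, smul_eq_mul] at hu hy hθ
    rw [map_smul, smul_smul] at hy
    set y := (F' (τ • P, 0)).1
    set r := (1 - τ * u)⁻¹ * τ with hr
    obtain ⟨L, hL, hLc⟩ := h.hasStrictFDerivAt_defect y
    let η : ℂ → ℂ := fun t => polLog (t • X) (τ • P)
    have hη0 : Tendsto η (𝓝 0) (𝓝 0) := by
      have h3 := (hasFDerivAt_polLog_left (τ • P)).continuousAt.tendsto
      rw [polLog_zero_left] at h3
      exact h3.comp (htP X)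
    have hη : Tendsto (fun t => η t / t ^ 2) (𝓝[≠] 0) (𝓝 (-τ ^ 2)) := by
      have h3 : HasDerivAt (fun x : ℂ => Complex.log (1 - x * τ ^ 2)) (-τ ^ 2) 0 := by
        have h4 : HasDerivAt (fun x : ℂ => 1 - x * τ ^ 2) (-τ ^ 2) 0 := by
          simpa using ((hasDerivAt_id (0 : ℂ)).mul_const (τ ^ 2)).const_sub 1
        simpa using h4.clog (by simp)
      rw [hasDerivAt_iff_tendsto_slope_zero] at h3
      have h5 : Tendsto (fun t : ℂ => t ^ 2) (𝓝[≠] 0) (𝓝[≠] 0) := by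
        refine tendsto_nhdsWithin_iff.2 ⟨?_, ?_⟩
        · exact ((continuous_pow 2).tendsto' (0 : ℂ) 0 (by simp)).mono_left nhdsWithin_le_nhds
        · filter_upwards [self_mem_nhdsWithin] with t ht
          exact pow_ne_zero 2 ht
      refine (h3.comp h5).congr fun t => ?_
      simp [η, polLog, hXP, div_eq_inv_mul]
    have hpair : Tendsto (fun t : ℂ => ((t • X, η t), (t • X, (0 : ℂ)))) (𝓝[≠] 0)
        (𝓝 ((0 : MatE p q × ℂ), (0 : MatE p q × ℂ))) :=
      ((((htP X).prodMk_nhds hη0)).prodMk_nhds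
        ((htP X).prodMk_nhds tendsto_const_nhds)).mono_left nhdsWithin_le_nhds
    have o1 := hL.isLittleO.comp_tendsto hpair
    have o2 : (fun t => ((t • X, η t) : MatE p q × ℂ) - (t • X, (0 : ℂ))) =O[𝓝[≠] 0]
        fun t : ℂ => t ^ 2 := by
      have h3 : (fun t => ((t • X, η t) : MatE p q × ℂ) - (t • X, (0 : ℂ))) =O[𝓝[≠] 0] η :=
        Asymptotics.isBigO_of_le _ fun t => by simp [Prod.norm_def]
      refine h3.trans (Asymptotics.isBigO_of_div_tendsto_nhds ?_ _ hη)
      filter_upwards [self_mem_nhdsWithin] with t ht ht2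
      exact absurd ht2 (pow_ne_zero 2 ht)
    have o3 := (o1.trans_isBigO o2).tendsto_div_nhds_zero
    have hev : ∀ᶠ t in 𝓝[≠] (0 : ℂ),
        (r * (1 - t * κ)⁻¹) ^ 2 * Q.eval (r * (1 - t * κ)⁻¹ * t) -
          (scalPart F * (1 - τ * u)⁻¹) * (η t / t ^ 2) =
        (cexp (F (t • X, η t)).2 - polNorm (F (t • X, η t)).1 y -
          (cexp (F (t • X, 0)).2 - polNorm (F (t • X, 0)).1 y) -
          L ((t • X, η t) - (t • X, 0))) / t ^ 2 := by
      filter_upwards [((htP X).eventually h1).filter_mono nhdsWithin_le_nhds,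
        ((htP X).eventually h.eventually_snd_eq_zero).filter_mono nhdsWithin_le_nhds,
        ((htP X).eventually (h.symm.eventually_fst_eq hγ' hU')).filter_mono nhdsWithin_le_nhds,
        self_mem_nhdsWithin] with t e1 e2 e3 ht
      have ht0 : t ≠ 0 := ht
      have e1' : cexp (F (t • X, η t)).2 = polNorm (F (t • X, η t)).1 y := e1
      have e4 : (F (t • X, 0)).1 = ((1 - t * κ)⁻¹ * t) • linPart F X := by
        rw [e3.2.1, map_smul, map_smul, smul_smul, smul_eq_mul]
      have e5 : L ((t • X, η t) - (t • X, 0)) = η t * (scalPart F * (1 - τ * u)⁻¹) := by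
        rw [Prod.mk_sub_mk, sub_self, sub_zero, hLc, hθ]
      have e6 : polNorm (F (t • X, 0)).1 y = 1 + (r * (1 - t * κ)⁻¹ * t) ^ 2 *
          Q.eval (r * (1 - t * κ)⁻¹ * t) := by
        rw [e4, hy, ← polNorm_smul_left, smul_smul, ← mul_assoc, hQ]
        ring
      rw [e1', e2, e5, e6, Complex.exp_zero]
      field_simp
      ring
    have o4 := o3.congr' (hev.mono fun t ht => ht.symm)
    have hQc : Tendsto (fun t => (r * (1 - t * κ)⁻¹) ^ 2 * Q.eval (r * (1 - t * κ)⁻¹ * t) -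
          (scalPart F * (1 - τ * u)⁻¹) * (η t / t ^ 2)) (𝓝[≠] 0)
          (𝓝 ((r * (1 - 0 * κ)⁻¹) ^ 2 * Q.eval (r * (1 - 0 * κ)⁻¹ * 0) -
          (scalPart F * (1 - τ * u)⁻¹) * (-τ ^ 2))) := by
      refine Tendsto.sub ?_ (hη.const_mul _)
      refine Tendsto.mono_left (ContinuousAt.tendsto ?_) nhdsWithin_le_nhds
      have hinv : ContinuousAt (fun t : ℂ => (1 - t * κ)⁻¹) 0 :=
        ContinuousAt.inv₀ (by fun_prop) (by simp)
      have hQ' : ContinuousAt (fun t : ℂ => Q.eval (r * (1 - t * κ)⁻¹ * t)) 0 :=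
        Q.continuous.continuousAt.comp (f := fun t : ℂ => r * (1 - t * κ)⁻¹ * t) (by fun_prop)
      fun_prop
    have hfin := tendsto_nhds_unique hQc o4
    simp only [zero_mul, sub_zero, inv_one, mul_one, mul_zero, hr] at hfin
    have hτ2 : τ ^ 2 ≠ 0 := pow_ne_zero 2 hτ0
    have hu' : (1 - τ * u) * (1 - τ * u)⁻¹ = 1 := mul_inv_cancel₀ hu
    have h9 : τ ^ 2 * (Q.eval 0 + scalPart F * (1 - τ * u)) = 0 := by
      linear_combination (1 - τ * u) ^ 2 * hfin - τ ^ 2 * Q.eval 0 *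
        ((1 - τ * u) * (1 - τ * u)⁻¹ + 1) * hu' - τ ^ 2 * (1 - τ * u) * scalPart F * hu'
    linear_combination (mul_eq_zero.1 h9).resolve_left hτ2
  have hlim : Q.eval 0 = -(scalPart F * (1 - 0 * u)) := by
    have h1 : Continuous fun τ : ℂ => -(scalPart F * (1 - τ * u)) := by fun_prop
    have h2 := (h1.tendsto 0).mono_left (nhdsWithin_le_nhds (s := {0}ᶜ))
    exact tendsto_nhds_unique_of_eventuallyEq tendsto_const_nhds h2 key
  obtain ⟨τ, h1, hτ⟩ := (key.and self_mem_nhdsWithin).exists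
  have h2 : (scalPart F * τ) * u = 0 := by linear_combination hlim - h1
  exact (mul_eq_zero.1 h2).resolve_left (mul_ne_zero hγ hτ)

lemma vertPart_eq_zero (h : IsPolPair F F') (hp : 2 ≤ p) (hq : 2 ≤ q) (hγ : scalPart F ≠ 0) :
    vertPart F = 0 := by
  have hγ' : scalPart F' ≠ 0 := by rwa [← h.scalPart_eq ⟨0, by lia⟩ ⟨0, by lia⟩]
  obtain ⟨U, hU⟩ := (h.linPart_bijective hγ).2 (vertPart F)
  suffices U = 0 by rw [← hU, this, _root_.map_zero]
  ext i a
  have : Nontrivial (Fin p) := Fin.nontrivial_iff_two_le.2 hp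
  have : Nontrivial (Fin q) := Fin.nontrivial_iff_two_le.2 hq
  obtain ⟨j, hj⟩ := exists_ne i
  obtain ⟨b, hb⟩ := exists_ne a
  have key : ∀ c : ℂ, c ^ 2 = 1 → U i a + c * U j b = 0 := fun c hc => by
    have := h.dotE_eq_zero_of_polNorm hγ hγ' (polNorm_single_sub_single hj.symm hb.symm hc) hU
    rw [dotE_comm, map_add, _root_.add_apply, dotE_single_left,
      dotE_single_left, one_mul] at this
    exact this
  have h1 := key 1 (by norm_num)
  have h2 := key (-1) (by norm_num)
  change U i a = 0
  linear_combination (h1 + h2) / 2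

end IsPolPair

end VertPart

section Dichotomy

variable {p q : ℕ}

/-- `F` is holomorphic near the point `m` of the hypersurface `2 Re ω = log N(Z)` and maps the
hypersurface into itself near `m`. -/
structure PreservesAt (F : MatE p q × ℂ → MatE p q × ℂ) (m : MatE p q × ℂ) : Prop where
  mem : m ∈ logBundle p q
  diff : ∀ᶠ x in 𝓝 m, DifferentiableAt ℂ F x
  maps : ∀ᶠ x in 𝓝 m, x ∈ logBundle p q → F x ∈ logBundle p q

variable {F : MatE p q × ℂ → MatE p q × ℂ} {m : MatE p q × ℂ}

lemma PreservesAt.eventually (h : PreservesAt F m) :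
    ∀ᶠ x in 𝓝 m, x ∈ logBundle p q → PreservesAt F x := by
  filter_upwards [h.diff.eventually_nhds, h.maps.eventually_nhds] with x h1 h2 hx
  exact ⟨hx, h1, h2⟩

lemma PreservesAt.isPolPair (h : PreservesAt F 0) (h0 : F 0 = 0) : IsPolPair F (starMap F) :=
  isPolPair_starMap h.diff h0 h.maps

lemma linPart_starMap (hd : DifferentiableAt ℂ F 0) (X : MatE p q) :
    linPart (starMap F) (star X) = star (linPart F X) := by
  have h1 := hd.hasFDerivAt.star_star
  rw [star_zero] at h1
  have h2 : fderiv ℂ (starMap F) 0 = _ := h1.fderiv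
  rw [linPart_apply, linPart_apply, h2]
  have e : star ((star X, 0) : MatE p q × ℂ) = (X, 0) := Prod.ext (star_star X) (star_zero _)
  simp [e]

lemma PreservesAt.dotE_linPart_star (h : PreservesAt F 0) (h0 : F 0 = 0) (X : MatE p q) :
    dotE (linPart F X) (star (linPart F X)) = scalPart F * dotE X (star X) := by
  rw [← linPart_starMap h.diff.self_of_nhds, (h.isPolPair h0).dotE_linPart_linPart]

lemma PreservesAt.fderiv_eq_zero_or (h : PreservesAt F 0) (h0 : F 0 = 0) (hp : 2 ≤ p) (hq : 2 ≤ q) :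
    (∀ X, fderiv ℂ F 0 (X, 0) = 0) ∨ (scalPart F ≠ 0 ∧ vertPart F = 0) := by
  by_cases hγ : scalPart F = 0
  · left
    intro X
    have h1 := h.dotE_linPart_star h0 X
    rw [hγ, zero_mul] at h1
    rw [(h.isPolPair h0).fderiv_apply, dotE_star_self_eq_zero h1]
    simp
  · exact Or.inr ⟨hγ, (h.isPolPair h0).vertPart_eq_zero hp hq hγ⟩

/-- The map `(Z, ω) ↦ (ψ Z, ω + H Z)`. -/
def fibMap (ψ : MatE p q → MatE p q) (H : MatE p q → ℂ) : MatE p q × ℂ → MatE p q × ℂ :=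
  fun P => (ψ P.1, P.2 + H P.1)

/-- `Φ` and `Φ'` are mutually inverse fibred automorphisms. -/
structure IsBundleAut (Φ Φ' : MatE p q × ℂ → MatE p q × ℂ) : Prop where
  fib : ∃ ψ H, IsFibAut ψ H ∧ Φ = fibMap ψ H
  fib' : ∃ ψ H, IsFibAut ψ H ∧ Φ' = fibMap ψ H
  left_inv : ∀ P, P.1 ∈ typeIDomain p q → Φ' (Φ P) = P
  right_inv : ∀ P, P.1 ∈ typeIDomain p q → Φ (Φ' P) = P

lemma mem_nhds_typeIDomain_prod {P : MatE p q × ℂ} (hP : P.1 ∈ typeIDomain p q) :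
    ∀ᶠ x in 𝓝 P, x.1 ∈ typeIDomain p q :=
  continuous_fst.continuousAt.eventually (isOpen_typeIDomain.mem_nhds hP)

namespace IsBundleAut

variable {Φ Φ' Φ₂ Φ₂' : MatE p q × ℂ → MatE p q × ℂ} {P : MatE p q × ℂ}

lemma symm (h : IsBundleAut Φ Φ') : IsBundleAut Φ' Φ := ⟨h.fib', h.fib, h.right_inv, h.left_inv⟩

lemma mapsTo (h : IsBundleAut Φ Φ') (hP : P.1 ∈ typeIDomain p q) : (Φ P).1 ∈ typeIDomain p q := by
  obtain ⟨ψ, H, hf, rfl⟩ := h.fib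
  exact hf.1.2.1 hP

lemma mapsTo_logBundle (h : IsBundleAut Φ Φ') (hP : P ∈ logBundle p q) : Φ P ∈ logBundle p q := by
  refine ⟨h.mapsTo hP.1, ?_⟩
  obtain ⟨ψ, H, hf, rfl⟩ := h.fib
  have h1 := hf.2.2 P.1 hP.1
  simp only [fibMap, add_re]
  rw [h1, ← hP.2]; ring

lemma hasFDerivAt (h : IsBundleAut Φ Φ') (hP : P.1 ∈ typeIDomain p q) :
    HasFDerivAt Φ (fderiv ℂ Φ P) P ∧ ∀ s, fderiv ℂ Φ P (0, s) = (0, s) := by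
  obtain ⟨ψ, H, hf, rfl⟩ := h.fib
  have h1 := (hf.1.1.differentiableAt (isOpen_typeIDomain.mem_nhds hP)).hasFDerivAt
  have h2 := (hf.2.1.differentiableAt (isOpen_typeIDomain.mem_nhds hP)).hasFDerivAt
  have h3 : HasFDerivAt (fibMap ψ H) _ P :=
    (HasFDerivAt.comp P h1 hasFDerivAt_fst).prodMk
      (hasFDerivAt_snd.add (HasFDerivAt.comp P h2 hasFDerivAt_fst))
  refine ⟨h3.differentiableAt.hasFDerivAt, fun s => ?_⟩
  rw [h3.fderiv]
  simp

lemma differentiableAt (h : IsBundleAut Φ Φ') (hP : P.1 ∈ typeIDomain p q) :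
    DifferentiableAt ℂ Φ P := (h.hasFDerivAt hP).1.differentiableAt

lemma fderiv_fderiv (h : IsBundleAut Φ Φ') (hP : P.1 ∈ typeIDomain p q) (v : MatE p q × ℂ) :
    fderiv ℂ Φ' (Φ P) (fderiv ℂ Φ P v) = v := by
  have h1 := HasFDerivAt.comp P (h.symm.hasFDerivAt (h.mapsTo hP)).1 (h.hasFDerivAt hP).1
  have h2 : (Φ' ∘ Φ) =ᶠ[𝓝 P] id := by
    filter_upwards [mem_nhds_typeIDomain_prod hP] with x hx
    exact h.left_inv x hx
  have h3 := h1.unique ((hasFDerivAt_id P).congr_of_eventuallyEq h2)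
  exact congrArg (fun L => L v) h3

lemma preservesAt (h : IsBundleAut Φ Φ') (h₂ : IsBundleAut Φ₂ Φ₂') (hF : PreservesAt F m) :
    PreservesAt (Φ₂ ∘ F ∘ Φ') (Φ m) := by
  have hm : Φ' (Φ m) = m := h.left_inv m hF.mem.1
  have hΩ : (Φ m).1 ∈ typeIDomain p q := h.mapsTo hF.mem.1
  have ht : Tendsto Φ' (𝓝 (Φ m)) (𝓝 m) := by
    simpa only [hm] using (h.symm.differentiableAt hΩ).continuousAt.tendsto
  have hFm : (F m).1 ∈ typeIDomain p q := (hF.maps.self_of_nhds hF.mem).1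
  have hFc : ∀ᶠ x in 𝓝 m, (F x).1 ∈ typeIDomain p q :=
    hF.diff.self_of_nhds.continuousAt.eventually (mem_nhds_typeIDomain_prod hFm)
  refine ⟨h.mapsTo_logBundle hF.mem, ?_, ?_⟩
  · filter_upwards [ht.eventually hF.diff, ht.eventually hFc,
      mem_nhds_typeIDomain_prod hΩ] with x h1 h2 h3
    exact (h₂.differentiableAt h2).comp x (h1.comp x (h.symm.differentiableAt h3))
  · filter_upwards [ht.eventually hF.maps] with x h1 hx
    exact h₂.mapsTo_logBundle (h1 (h.symm.mapsTo_logBundle hx))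

lemma fderiv_comp (h : IsBundleAut Φ Φ') (h₂ : IsBundleAut Φ₂ Φ₂') (hF : PreservesAt F m)
    (v : MatE p q × ℂ) : fderiv ℂ (Φ₂ ∘ F ∘ Φ') (Φ m) v =
      fderiv ℂ Φ₂ (F m) (fderiv ℂ F m (fderiv ℂ Φ' (Φ m) v)) := by
  have hm : Φ' (Φ m) = m := h.left_inv m hF.mem.1
  have hΩ : (Φ m).1 ∈ typeIDomain p q := h.mapsTo hF.mem.1
  have hFm : (F m).1 ∈ typeIDomain p q := (hF.maps.self_of_nhds hF.mem).1
  have h1 := (h.symm.hasFDerivAt hΩ).1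
  have h2 : HasFDerivAt F (fderiv ℂ F m) (Φ' (Φ m)) := by
    rw [hm]; exact hF.diff.self_of_nhds.hasFDerivAt
  have h3 := HasFDerivAt.comp (Φ m) h2 h1
  have h4 : HasFDerivAt Φ₂ (fderiv ℂ Φ₂ (F m)) ((F ∘ Φ') (Φ m)) := by
    rw [Function.comp_apply, hm]; exact (h₂.hasFDerivAt hFm).1
  rw [(HasFDerivAt.comp (Φ m) h4 h3).fderiv]
  rfl

end IsBundleAut

/-- The derivative of the polarized generic norm in the first variable. -/
def dPol (Z Y X : MatE p q) : ℂ :=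
  fderiv ℂ (fun x : MatE p q × MatE p q => polNorm x.1 x.2) (Z, Y) (X, 0)

lemma hasFDerivAt_polNorm_dPol (Z Y : MatE p q) :
    HasFDerivAt (fun Z => polNorm Z Y) (fderiv ℂ (fun Z => polNorm Z Y) Z) Z ∧
      ∀ X, fderiv ℂ (fun Z => polNorm Z Y) Z X = dPol Z Y X := by
  have h1 := (differentiable_polNorm (p := p) (q := q) (Z, Y)).hasFDerivAt
  have h2 := HasFDerivAt.comp Z (f := fun Z => (Z, Y)) h1 ((hasFDerivAt_id Z).prodMk (hasFDerivAt_const Y Z))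
  have h3 : fderiv ℂ (fun Z => polNorm Z Y) Z = _ := h2.fderiv
  refine ⟨h2.differentiableAt.hasFDerivAt, fun X => ?_⟩
  rw [h3]
  simp [dPol]

lemma dPol_zero_left (Y X : MatE p q) : dPol 0 Y X = -dotE X Y := by
  rw [← (hasFDerivAt_polNorm_dPol 0 Y).2, (hasFDerivAt_polNorm_left Y).fderiv]
  simp

lemma dPol_zero_right (Z X : MatE p q) : dPol Z 0 X = 0 := by
  rw [← (hasFDerivAt_polNorm_dPol Z 0).2]
  simp [polNorm_zero_right]

lemma differentiable_dPol (X : MatE p q) :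
    Differentiable ℂ fun x : MatE p q × MatE p q => dPol x.1 x.2 X := fun _ =>
  differentiableAt_fderiv_apply (.of_forall differentiable_polNorm) _

/-- Every point of the hypersurface can be moved to the origin. -/
lemma exists_isBundleAut (hm : m ∈ logBundle p q) :
    ∃ Φ Φ', IsBundleAut (p := p) (q := q) Φ Φ' ∧ Φ m = 0 ∧
      ∀ X, ∃ X', fderiv ℂ Φ m (polNorm m.1 (star m.1) • X, dPol m.1 (star m.1) X) = (X', 0) := by
  obtain ⟨ψ, H, hf, h0, h1, c, hc⟩ := exists_isFibAut hm.1 hm.2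
  obtain ⟨ψ', H', hf', hl, hr⟩ := hf.exists_symm
  have hΩ := isOpen_typeIDomain.mem_nhds hm.1
  refine ⟨fibMap ψ H, fibMap ψ' H', ⟨⟨ψ, H, hf, rfl⟩, ⟨ψ', H', hf', rfl⟩, fun P hP => ?_,
    fun P hP => ?_⟩, ?_, fun X => ?_⟩
  · simp only [fibMap]
    rw [(hl P.1 hP).1, add_assoc, (hl P.1 hP).2, add_zero]
  · simp only [fibMap]
    rw [(hr P.1 hP).1, add_assoc, (hr P.1 hP).2, add_zero]
  · simp only [fibMap]
    rw [h0, h1]; rfl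
  · have d1 := (hf.1.1.differentiableAt hΩ).hasFDerivAt
    have d2 := (hf.2.1.differentiableAt hΩ).hasFDerivAt
    have d3 : HasFDerivAt (fibMap ψ H) _ m :=
      (HasFDerivAt.comp m d1 hasFDerivAt_fst).prodMk
        (hasFDerivAt_snd.add (HasFDerivAt.comp m d2 hasFDerivAt_fst))
    have d4 := d2.cexp.mul (hasFDerivAt_polNorm_dPol m.1 (star m.1)).1
    have d5 : HasFDerivAt (fun _ : MatE p q => c) (0 : MatE p q →L[ℂ] ℂ) m.1 :=
      hasFDerivAt_const _ _
    have d6 := congrArg (fun L => L X) (d4.unique (d5.congr_of_eventuallyEq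
      (by filter_upwards [hΩ] with Z hZ using hc Z hZ)))
    simp [(hasFDerivAt_polNorm_dPol m.1 (star m.1)).2] at d6
    have d7 : dPol m.1 (star m.1) X + polNorm m.1 (star m.1) * fderiv ℂ H m.1 X = 0 := by
      refine (mul_eq_zero.1 (?_ : cexp (H m.1) * _ = 0)).resolve_left (Complex.exp_ne_zero _)
      linear_combination d6
    refine ⟨polNorm m.1 (star m.1) • fderiv ℂ ψ m.1 X, ?_⟩
    rw [d3.fderiv]
    simpa using d7

/-- The derivative of `F` vanishes on the complex tangent space of the hypersurface at `m`. -/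
def VanishesAt (F : MatE p q × ℂ → MatE p q × ℂ) (m : MatE p q × ℂ) : Prop :=
  ∀ X, fderiv ℂ F m (polNorm m.1 (star m.1) • X, dPol m.1 (star m.1) X) = 0

/-- Normalization of a map at a point of the hypersurface. -/
lemma PreservesAt.exists_normalization (h : PreservesAt F m) :
    ∃ Φ Φ' Φ₂ Φ₂', IsBundleAut (p := p) (q := q) Φ Φ' ∧ IsBundleAut (p := p) (q := q) Φ₂ Φ₂' ∧
      Φ m = 0 ∧ PreservesAt (Φ₂ ∘ F ∘ Φ') 0 ∧ (Φ₂ ∘ F ∘ Φ') 0 = 0 ∧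
      ((∀ X, fderiv ℂ (Φ₂ ∘ F ∘ Φ') 0 (X, 0) = 0) → VanishesAt F m) ∧
      (vertPart (Φ₂ ∘ F ∘ Φ') = 0 → (fderiv ℂ F m (0, 1)).1 = 0) := by
  obtain ⟨Φ, Φ', hΦ, hm, hv⟩ := exists_isBundleAut h.mem
  have hFm := h.maps.self_of_nhds h.mem
  obtain ⟨Φ₂, Φ₂', hΦ₂, hm₂, -⟩ := exists_isBundleAut hFm
  have hm' : Φ' 0 = m := by rw [← hm]; exact hΦ.left_inv m h.mem.1
  have hD := hΦ.fderiv_comp hΦ₂ h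
  have hinj : ∀ v, fderiv ℂ Φ₂' (Φ₂ (F m)) (fderiv ℂ Φ₂ (F m) v) = v := hΦ₂.fderiv_fderiv hFm.1
  have hpres := hΦ.preservesAt hΦ₂ h
  rw [hm] at hpres hD
  refine ⟨Φ, Φ', Φ₂, Φ₂', hΦ, hΦ₂, hm, hpres, ?_, fun h1 X => ?_, fun h1 => ?_⟩
  · simp only [Function.comp_apply, hm', hm₂]
  · obtain ⟨X', hX'⟩ := hv X
    have h2 := hΦ.fderiv_fderiv h.mem.1 (polNorm m.1 (star m.1) • X, dPol m.1 (star m.1) X)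
    rw [hX', hm] at h2
    have h3 := h1 X'
    rw [hD, h2] at h3
    rw [← hinj (fderiv ℂ F m _), h3, map_zero]
  · have h2 := (hΦ.symm.hasFDerivAt (P := 0) zero_mem_typeIDomain).2 1
    rw [vertPart, hD, h2] at h1
    have h3 : fderiv ℂ Φ₂ (F m) (fderiv ℂ F m (0, 1)) =
        (0, (fderiv ℂ Φ₂ (F m) (fderiv ℂ F m (0, 1))).2) := Prod.ext h1 rfl
    rw [← hinj (fderiv ℂ F m (0, 1)), h3, (hΦ₂.symm.hasFDerivAt (hΦ₂.mapsTo hFm.1)).2]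

lemma PreservesAt.vanishesAt_or (h : PreservesAt F m) (hp : 2 ≤ p) (hq : 2 ≤ q) :
    VanishesAt F m ∨ (fderiv ℂ F m (0, 1)).1 = 0 := by
  obtain ⟨Φ, Φ', Φ₂, Φ₂', -, -, -, h1, h2, h3, h4⟩ := h.exists_normalization
  exact (h1.fderiv_eq_zero_or h2 hp hq).imp h3 fun h5 => h4 h5.2

end Dichotomy

section Nondegenerate

variable {p q : ℕ} {F : MatE p q × ℂ → MatE p q × ℂ}

lemma differentiableAt_levi {x : MatE p q × ℂ × MatE p q}
    (hx : ∀ᶠ y in 𝓝 (x.1, x.2.1), DifferentiableAt ℂ F y) (X : MatE p q) :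
    DifferentiableAt ℂ (fun x : MatE p q × ℂ × MatE p q =>
      polNorm x.1 x.2.2 • fderiv ℂ F (x.1, x.2.1) (X, 0) +
        dPol x.1 x.2.2 X • fderiv ℂ F (x.1, x.2.1) (0, 1)) x := by
  have h1 : ∀ v, DifferentiableAt ℂ
      (fun x : MatE p q × ℂ × MatE p q => fderiv ℂ F (x.1, x.2.1) v) x := by
    intro v
    have := DifferentiableAt.comp x (g := fun y => fderiv ℂ F y v)
      (f := fun x : MatE p q × ℂ × MatE p q => (x.1, x.2.1))
      (differentiableAt_fderiv_apply hx v) (by fun_prop)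
    exact this
  have h2 : DifferentiableAt ℂ (fun x : MatE p q × ℂ × MatE p q => polNorm x.1 x.2.2) x := by
    have := DifferentiableAt.comp x (g := fun x : MatE p q × MatE p q => polNorm x.1 x.2)
      (f := fun x : MatE p q × ℂ × MatE p q => (x.1, x.2.2))
      (differentiable_polNorm _) (by fun_prop)
    exact this
  have h3 : DifferentiableAt ℂ (fun x : MatE p q × ℂ × MatE p q => dPol x.1 x.2.2 X) x := by
    have := DifferentiableAt.comp x (g := fun x : MatE p q × MatE p q => dPol x.1 x.2 X)
      (f := fun x : MatE p q × ℂ × MatE p q => (x.1, x.2.2))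
      (differentiable_dPol X _) (by fun_prop)
    exact this
  exact (h2.fun_smul (h1 _)).fun_add (h3.fun_smul (h1 _))

lemma tendsto_fst_snd_fst : Tendsto (fun x : MatE p q × ℂ × MatE p q => (x.1, x.2.1)) (𝓝 0) (𝓝 0) := by
  have : Continuous (fun x : MatE p q × ℂ × MatE p q => (x.1, x.2.1)) := by fun_prop
  exact this.tendsto' 0 0 rfl

lemma levi_eq (F : MatE p q × ℂ → MatE p q × ℂ) (P : MatE p q × ℂ) (Y X : MatE p q) :
    polNorm P.1 Y • fderiv ℂ F P (X, 0) + dPol P.1 Y X • fderiv ℂ F P (0, 1) =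
      fderiv ℂ F P (polNorm P.1 Y • X, dPol P.1 Y X) := by
  rw [← map_smul, ← map_smul, ← map_add]
  simp

lemma PreservesAt.frequently_not_vanishesAt (h : PreservesAt F 0) (i : Fin p) (j : Fin q)
    (hnc : ¬ ∀ᶠ x in 𝓝 0, F x = F 0) :
    ∃ᶠ m in 𝓝 0, m ∈ logBundle p q ∧ ¬ VanishesAt F m := by
  intro hv
  apply hnc
  have hK : ∀ X : MatE p q, ∀ᶠ x in 𝓝 (0 : MatE p q × ℂ × MatE p q),
      polNorm x.1 x.2.2 • fderiv ℂ F (x.1, x.2.1) (X, 0) +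
        dPol x.1 x.2.2 X • fderiv ℂ F (x.1, x.2.1) (0, 1) = 0 := fun X => by
    refine eventually_eq_zero_of_logBundle ?_ ?_
    · filter_upwards [tendsto_fst_snd_fst.eventually h.diff.eventually_nhds] with x hx
      exact differentiableAt_levi hx X
    · filter_upwards [hv] with m hm hmem
      have h1 : VanishesAt F m := by
        by_contra h2
        exact hm ⟨hmem, h2⟩
      have h2 := levi_eq F m (star m.1) X
      rw [h1 X] at h2
      exact h2
  have hhor : ∀ X : MatE p q, ∀ᶠ P in 𝓝 (0 : MatE p q × ℂ), fderiv ℂ F P (X, 0) = 0 := fun X => by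
    have ht : Tendsto (fun P : MatE p q × ℂ => (P.1, P.2, (0 : MatE p q))) (𝓝 0) (𝓝 0) := by
      have : Continuous (fun P : MatE p q × ℂ => (P.1, P.2, (0 : MatE p q))) := by fun_prop
      exact this.tendsto' 0 0 rfl
    filter_upwards [ht.eventually (hK X)] with P hP
    simpa [dPol_zero_right, polNorm_zero_right] using hP
  have hhor' : ∀ᶠ P in 𝓝 (0 : MatE p q × ℂ), ∀ k l,
      fderiv ℂ F P (Pi.single k (Pi.single l 1), 0) = 0 :=
    eventually_all.2 fun k => eventually_all.2 fun l => hhor _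
  have hver : ∀ᶠ P in 𝓝 (0 : MatE p q × ℂ), fderiv ℂ F P (0, 1) = 0 := by
    let X : MatE p q := Pi.single i (Pi.single j 1)
    have ht : Tendsto (fun x : ℂ × (MatE p q × ℂ) => (x.2.1, x.2.2, x.1 • X))
        (𝓝 0 ×ˢ 𝓝 0) (𝓝 0) := by
      have : Continuous (fun x : ℂ × (MatE p q × ℂ) => (x.2.1, x.2.2, x.1 • X)) := by fun_prop
      rw [← nhds_prod_eq]
      exact this.tendsto' _ _ (by simp)
    obtain ⟨ε, hε, hε0⟩ := (((ht.eventually (hK X)).curry.filter_mono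
      (nhdsWithin_le_nhds (s := {0}ᶜ))).and self_mem_nhdsWithin).exists
    have hc : Continuous fun P : MatE p q × ℂ => dPol P.1 (ε • X) X :=
      (differentiable_dPol X).continuous.comp (by fun_prop : Continuous fun P : MatE p q × ℂ =>
        (P.1, ε • X))
    have hne : dPol (0 : MatE p q × ℂ).1 (ε • X) X ≠ 0 := by
      rw [Prod.fst_zero, dPol_zero_left]
      simpa [X, dotE_single_left] using hε0
    filter_upwards [hε, hc.continuousAt.eventually_ne hne, hhor X] with P h1 h2 h3
    rw [h3, smul_zero, zero_add] at h1
    exact (smul_eq_zero.1 h1).resolve_left h2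
  have hzero : ∀ᶠ P in 𝓝 (0 : MatE p q × ℂ), fderiv ℂ F P = 0 := by
    filter_upwards [hhor', hver] with P h1 h2
    have h3 : ((fderiv ℂ F P).comp (ContinuousLinearMap.inl ℂ (MatE p q) ℂ) :
        MatE p q →ₗ[ℂ] MatE p q × ℂ) = 0 := by
      refine LinearMap.pi_ext' fun k => LinearMap.pi_ext' fun l => LinearMap.ext_ring ?_
      simpa using h1 k l
    refine ContinuousLinearMap.ext fun v => ?_
    have e : v = (v.1, (0 : ℂ)) + v.2 • ((0 : MatE p q), (1 : ℂ)) := by ext <;> simp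
    have h4 : fderiv ℂ F P (v.1, (0 : ℂ)) = 0 := congrArg (fun L => L v.1) h3
    rw [e, map_add, map_smul, h2, h4]
    simp
  obtain ⟨r, hr, hb⟩ := Metric.eventually_nhds_iff_ball.1 (hzero.and h.diff)
  filter_upwards [ball_mem_nhds 0 hr] with x hx
  exact isOpen_ball.is_const_of_fderiv_eq_zero (𝕜 := ℂ) (convex_ball 0 r).isPreconnected
    (fun y hy => (hb y hy).2.differentiableWithinAt) (fun y hy => (hb y hy).1) hx (mem_ball_self hr)

lemma PreservesAt.eventually_fderiv_vert (h : PreservesAt F 0) (hp : 2 ≤ p) (hq : 2 ≤ q)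
    {X : MatE p q} (hX : fderiv ℂ F 0 (X, 0) ≠ 0) :
    ∀ᶠ P in 𝓝 (0 : MatE p q × ℂ), (fderiv ℂ F P (0, 1)).1 = 0 := by
  have hs : Tendsto (fun P : MatE p q × ℂ => (P.1, P.2, star P.1)) (𝓝 0) (𝓝 0) := by
    have : Continuous (fun P : MatE p q × ℂ => (P.1, P.2, star P.1)) := by fun_prop
    exact this.tendsto' 0 0 (by simp)
  have hc := (differentiableAt_levi (x := 0) h.diff X).continuousAt
  have hne : polNorm (0 : MatE p q × ℂ × MatE p q).1 (0 : MatE p q × ℂ × MatE p q).2.2 •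
      fderiv ℂ F ((0 : MatE p q × ℂ × MatE p q).1, (0 : MatE p q × ℂ × MatE p q).2.1) (X, 0) +
        dPol (0 : MatE p q × ℂ × MatE p q).1 (0 : MatE p q × ℂ × MatE p q).2.2 X •
        fderiv ℂ F ((0 : MatE p q × ℂ × MatE p q).1, (0 : MatE p q × ℂ × MatE p q).2.1) (0, 1) ≠ 0 := by
    have e : ((0 : MatE p q), (0 : ℂ)) = 0 := rfl
    simpa [polNorm_zero_left, dPol_zero_left, e] using hX
  have hnv : ∀ᶠ P in 𝓝 (0 : MatE p q × ℂ), P ∈ logBundle p q → (fderiv ℂ F P (0, 1)).1 = 0 := by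
    filter_upwards [hs.eventually (hc.eventually_ne hne), h.eventually] with P h1 h2 hP
    refine ((h2 hP).vanishesAt_or hp hq).resolve_left fun hv => h1 ?_
    have h3 := levi_eq F P (star P.1) X
    rw [hv X] at h3
    exact h3
  have key := eventually_eq_zero_of_logBundle (p := p) (q := q)
    (K := fun x => (fderiv ℂ F (x.1, x.2.1) (0, 1)).1) ?_ ?_
  · have ht : Tendsto (fun P : MatE p q × ℂ => (P.1, P.2, (0 : MatE p q))) (𝓝 0) (𝓝 0) := by
      have : Continuous (fun P : MatE p q × ℂ => (P.1, P.2, (0 : MatE p q))) := by fun_prop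
      exact this.tendsto' 0 0 rfl
    exact ht.eventually key
  · filter_upwards [tendsto_fst_snd_fst.eventually h.diff.eventually_nhds] with x hx
    exact (DifferentiableAt.comp x (g := fun y => fderiv ℂ F y (0, 1))
      (f := fun x : MatE p q × ℂ × MatE p q => (x.1, x.2.1))
      (differentiableAt_fderiv_apply hx _) (by fun_prop)).fst
  · exact hnv

end Nondegenerate

section LinearModel

variable {p q : ℕ}

lemma mem_typeIDomain_of_genNormI_ne_zero {W : MatE p q}
    (h : ∀ s : ℝ, 0 ≤ s → s ≤ 1 → genNormI ((s : ℂ) • W) ≠ 0) : W ∈ typeIDomain p q := by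
  have hH : (1 - Matrix.of W * (Matrix.of W)ᴴ).IsHermitian := by
    simp [Matrix.IsHermitian, conjTranspose_sub, conjTranspose_mul]
  by_contra hW
  have h1 : ¬ (1 - Matrix.of W * (Matrix.of W)ᴴ).PosDef := hW
  rw [hH.posDef_iff_eigenvalues_pos] at h1
  push Not at h1
  obtain ⟨i, hi⟩ := h1
  set e := hH.eigenvalues i with he
  set v := (hH.eigenvectorBasis i).ofLp with hv
  have hv0 : v ≠ 0 := by
    intro h2
    exact hH.eigenvectorBasis.toBasis.ne_zero i (by
      rw [OrthonormalBasis.coe_toBasis]; exact (WithLp.ofLp_eq_zero 2).1 h2)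
  have hev : (1 - Matrix.of W * (Matrix.of W)ᴴ) *ᵥ v = e • v := hH.mulVec_eigenvectorBasis i
  have hpos : 0 < 1 - e := by linarith
  set s : ℝ := √(1 - e)⁻¹ with hs
  have hs2 : s ^ 2 = (1 - e)⁻¹ := Real.sq_sqrt (by positivity)
  have hs1 : s ≤ 1 := by
    rw [hs, Real.sqrt_le_one]
    exact inv_le_one_of_one_le₀ (by linarith)
  refine h s (Real.sqrt_nonneg _) hs1 ?_
  have hWv : (Matrix.of W * (Matrix.of W)ᴴ) *ᵥ v = ((1 - e : ℝ) : ℂ) • v := by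
    rw [Matrix.sub_mulVec, Matrix.one_mulVec] at hev
    rw [ofReal_sub, ofReal_one, sub_smul, one_smul, Complex.coe_smul, ← hev]
    abel
  have hM : (1 - Matrix.of ((s : ℂ) • W) * (Matrix.of ((s : ℂ) • W))ᴴ) *ᵥ v = 0 := by
    have e1 : Matrix.of ((s : ℂ) • W) = (s : ℂ) • Matrix.of W := rfl
    have e2 : (s : ℂ) * (s * ((1 - e : ℝ) : ℂ)) = 1 := by
      rw [← mul_assoc, ← sq, ← ofReal_pow, hs2, ← ofReal_mul, inv_mul_cancel₀ hpos.ne', ofReal_one]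
    rw [e1, conjTranspose_smul, Matrix.smul_mul, Matrix.mul_smul, Matrix.sub_mulVec,
      Matrix.one_mulVec, Matrix.smul_mulVec, Matrix.smul_mulVec, hWv, Complex.star_def,
      conj_ofReal, smul_smul, smul_smul, mul_assoc, e2, one_smul, sub_self]
  have hdet := Matrix.exists_mulVec_eq_zero_iff.1 ⟨v, hv0, hM⟩
  rw [genNormI, hdet, zero_re]

/-- A complex power of `1 - ε t` agrees with a polynomial near zero only for natural exponents. -/
lemma exists_nat_eq_of_exp_log_eq_eval {c ε : ℂ} (hε : ε ≠ 0) {Q : Polynomial ℂ}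
    (h : ∀ᶠ t in 𝓝 (0 : ℂ), cexp (c * log (1 - ε * t)) = Q.eval t) : ∃ n : ℕ, c = n := by
  have hslit : ∀ᶠ t in 𝓝 (0 : ℂ), 1 - ε * t ∈ slitPlane := by
    have : Continuous fun t : ℂ => 1 - ε * t := by fun_prop
    exact (this.tendsto' 0 1 (by simp)).eventually (isOpen_slitPlane.mem_nhds one_mem_slitPlane)
  have hQ0 : Q ≠ 0 := by
    rintro rfl
    have := h.self_of_nhds
    simp at this
  have hode : ∀ᶠ t in 𝓝 (0 : ℂ), ((1 - Polynomial.C ε * Polynomial.X) * Q.derivative).eval t =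
      (Polynomial.C (-(c * ε)) * Q).eval t := by
    filter_upwards [h.eventually_nhds, hslit] with t ht hs
    have h1 : HasDerivAt (fun t : ℂ => 1 - ε * t) (-ε) t := by
      simpa using ((hasDerivAt_id t).const_mul ε).const_sub 1
    have h2 := ((h1.clog hs).const_mul c).cexp
    have h3 := (h2.congr_of_eventuallyEq (ht.mono fun x hx => hx.symm)).unique (Q.hasDerivAt t)
    rw [ht.self_of_nhds] at h3
    have h4 : 1 - ε * t ≠ 0 := slitPlane_ne_zero hs
    simp only [Polynomial.eval_mul, Polynomial.eval_sub, Polynomial.eval_one, Polynomial.eval_C,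
      Polynomial.eval_X]
    rw [← h3]
    field_simp
  have hpoly := Polynomial.eq_of_infinite_eval_eq _ _ (infinite_of_mem_nhds (0 : ℂ) hode)
  refine ⟨Q.natDegree, ?_⟩
  have hc := congrArg (fun R => Polynomial.coeff R Q.natDegree) hpoly
  have hlead : Q.coeff Q.natDegree ≠ 0 := by simpa using hQ0
  have hnext : Q.coeff (Q.natDegree + 1) = 0 := Polynomial.coeff_eq_zero_of_natDegree_lt (by lia)
  have hX : (Polynomial.X * Q.derivative).coeff Q.natDegree =
      Q.coeff Q.natDegree * Q.natDegree := by
    cases hn : Q.natDegree with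
    | zero => simp
    | succ k => rw [Polynomial.coeff_X_mul, Polynomial.coeff_derivative]; push_cast; ring
  simp only [sub_mul, one_mul, mul_assoc, Polynomial.coeff_sub, Polynomial.coeff_C_mul, hX,
    Polynomial.coeff_derivative, hnext] at hc
  have : (c - Q.natDegree) * (ε * Q.coeff Q.natDegree) = 0 := by linear_combination hc
  exact sub_eq_zero.1 ((mul_eq_zero.1 this).resolve_right (mul_ne_zero hε hlead))

lemma polNorm_single_single (i : Fin p) (j : Fin q) (a b : ℂ) :
    polNorm (Pi.single i (Pi.single j a) : MatE p q) (Pi.single i (Pi.single j b)) = 1 - a * b := by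
  have e : ∀ a : ℂ, Matrix.of (Pi.single i (Pi.single j a) : MatE p q) = Matrix.single i j a :=
    fun a => (Matrix.single_eq_of_single_single i j a).symm
  rw [polNorm, e, e, Matrix.transpose_single, Matrix.single_mul_single_same]
  have : (1 - Matrix.single i i (a * b) : Matrix (Fin p) (Fin p) ℂ) =
      Matrix.diagonal (fun k => if k = i then 1 - a * b else 1) := by
    ext k l
    by_cases hkl : k = l
    · subst hkl
      by_cases hk : k = i
      · subst hk; simp
      · simp [hk, Ne.symm hk]
    · simp only [Matrix.sub_apply, Matrix.one_apply_ne hkl, Matrix.diagonal_apply_ne _ hkl,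
        Matrix.single_apply]
      rw [if_neg (by rintro ⟨rfl, rfl⟩; exact hkl rfl), sub_zero]
  rw [this, Matrix.det_diagonal, Finset.prod_ite_eq' Finset.univ i (fun _ => 1 - a * b)]
  simp

lemma tendsto_single (i : Fin p) (j : Fin q) {f : ℂ → ℂ} (hf : Tendsto f (𝓝 0) (𝓝 0)) :
    Tendsto (fun t => (Pi.single i (Pi.single j (f t)) : MatE p q)) (𝓝 0) (𝓝 0) := by
  have h : Continuous fun t : ℂ => (Pi.single i (Pi.single j t) : MatE p q) := by
    have e : (fun t : ℂ => (Pi.single i (Pi.single j t) : MatE p q)) =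
        fun t => t • (Pi.single i (Pi.single j 1) : MatE p q) := by
      funext t
      rw [← Pi.single_smul, ← Pi.single_smul, smul_eq_mul, mul_one]
    rw [e]; fun_prop
  exact (h.tendsto' 0 0 (by simp)).comp hf

/-- A multiple of a coordinate direction can be chosen generically in the second variable. -/
lemma exists_single_of_eventually (i : Fin p) (j : Fin q) {P : MatE p q → Prop}
    (h : ∀ᶠ Y in 𝓝 (0 : MatE p q), P Y) : ∃ ε : ℂ, ε ≠ 0 ∧ P (Pi.single i (Pi.single j ε)) := by
  have h1 := (tendsto_single i j tendsto_id).eventually h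
  obtain ⟨ε, h2, h3⟩ := ((h1.filter_mono (nhdsWithin_le_nhds (s := {0}ᶜ))).and
    self_mem_nhdsWithin).exists
  exact ⟨ε, h3, h2⟩

lemma tendsto_prod_swap_zero :
    Tendsto (fun x : MatE p q × MatE p q => (x.2, x.1)) (𝓝 0 ×ˢ 𝓝 0) (𝓝 0) := by
  rw [← nhds_prod_eq]
  exact continuous_swap.tendsto' _ _ rfl

lemma exists_nat_eq_of_polNorm_pow (i : Fin p) (j : Fin q) {c : ℂ} {B B' : MatE p q →L[ℂ] MatE p q}
    (h : ∀ᶠ x in 𝓝 (0 : MatE p q × MatE p q),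
      cexp (c * polLog x.1 x.2) = polNorm (B x.1) (B' x.2)) : ∃ n : ℕ, c = n := by
  obtain ⟨ε, hε, h1⟩ := exists_single_of_eventually i j
    (tendsto_prod_swap_zero.eventually h).curry
  obtain ⟨P, hP⟩ := exists_polNorm_smul (B (Pi.single i (Pi.single j 1)))
    (B' (Pi.single i (Pi.single j ε)))
  set d := dotE (B (Pi.single i (Pi.single j 1))) (B' (Pi.single i (Pi.single j ε)))
  refine exists_nat_eq_of_exp_log_eq_eval (c := c) hε
    (Q := 1 - Polynomial.X * Polynomial.C d + Polynomial.X ^ 2 * P) ?_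
  filter_upwards [(tendsto_single i j tendsto_id).eventually h1] with t ht
  have e : (Pi.single i (Pi.single j t) : MatE p q) = t • (Pi.single i (Pi.single j 1) : MatE p q) := by
    rw [← Pi.single_smul, ← Pi.single_smul, smul_eq_mul, mul_one]
  simp only [id, polLog, polNorm_single_single] at ht
  rw [mul_comm ε, ht, e, map_smul, hP]
  simp [mul_comm t d]

lemma differentiable_polNorm_comp (A A' : MatE p q →L[ℂ] MatE p q) :
    Differentiable ℂ (fun x : MatE p q × MatE p q => polNorm (A x.1) (A' x.2)) := by
  have := Differentiable.comp (g := fun x : MatE p q × MatE p q => polNorm x.1 x.2)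
    (f := fun x : MatE p q × MatE p q => (A x.1, A' x.2)) differentiable_polNorm (by fun_prop)
  exact this

lemma eventually_abs_im_lt_pi : ∀ᶠ z in 𝓝 (0 : ℂ), |z.im| < Real.pi := by
  have : Continuous fun z : ℂ => |z.im| := by fun_prop
  exact (this.tendsto' 0 0 (by simp)).eventually (gt_mem_nhds Real.pi_pos)

lemma eventually_polNorm_symm {c : ℂ} (hc : c ≠ 0) {A A' : MatE p q ≃L[ℂ] MatE p q}
    (h : ∀ᶠ x in 𝓝 (0 : MatE p q × MatE p q),
      cexp (c * polLog x.1 x.2) = polNorm (A x.1) (A' x.2)) :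
    ∀ᶠ x in 𝓝 (0 : MatE p q × MatE p q),
      cexp (c⁻¹ * polLog x.1 x.2) = polNorm (A.symm x.1) (A'.symm x.2) := by
  have hA : ∀ B : MatE p q ≃L[ℂ] MatE p q, Tendsto (fun Z => B Z) (𝓝 0) (𝓝 0) := fun B =>
    B.continuous.tendsto' _ _ (map_zero B)
  have h1 : Tendsto (fun x : MatE p q × MatE p q => A.symm x.1) (𝓝 0) (𝓝 0) :=
    (hA A.symm).comp (continuous_fst.tendsto' _ _ rfl)
  have h2 : Tendsto (fun x : MatE p q × MatE p q => A'.symm x.2) (𝓝 0) (𝓝 0) :=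
    (hA A'.symm).comp (continuous_snd.tendsto' _ _ rfl)
  have ht : Tendsto (fun x : MatE p q × MatE p q => (A.symm x.1, A'.symm x.2)) (𝓝 0) (𝓝 0) :=
    h1.prodMk_nhds h2
  have ht2 : Tendsto (fun x : MatE p q × MatE p q => c * polLog (A.symm x.1) (A'.symm x.2))
      (𝓝 0) (𝓝 0) := by
    have := (tendsto_polLog_of h1 h2).const_mul c
    rw [mul_zero] at this
    exact this
  filter_upwards [ht.eventually h, ht2.eventually eventually_abs_im_lt_pi,
    ht.eventually eventually_polNorm_mem_slitPlane] with x h1 h2 h3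
  simp only [ContinuousLinearEquiv.apply_symm_apply] at h1
  have h4 : polLog x.1 x.2 = c * polLog (A.symm x.1) (A'.symm x.2) := by
    rw [polLog, ← h1, log_exp (abs_lt.1 h2).1 (abs_lt.1 h2).2.le]
  rw [h4, inv_mul_cancel_left₀ hc, polLog, exp_log (slitPlane_ne_zero h3)]

/-- A linear isomorphism transforming the polarized generic norm by a power preserves it. -/
lemma polNorm_eq_of_pow (i : Fin p) (j : Fin q) {c : ℂ} (hc : c ≠ 0)
    {A A' : MatE p q ≃L[ℂ] MatE p q}
    (h : ∀ᶠ x in 𝓝 (0 : MatE p q × MatE p q),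
      cexp (c * polLog x.1 x.2) = polNorm (A x.1) (A' x.2)) :
    c = 1 ∧ ∀ Z Y, polNorm (A Z) (A' Y) = polNorm Z Y := by
  obtain ⟨n, hn⟩ := exists_nat_eq_of_polNorm_pow i j (B := A) (B' := A') h
  obtain ⟨m, hm⟩ := exists_nat_eq_of_polNorm_pow i j (B := A.symm) (B' := A'.symm)
    (eventually_polNorm_symm hc h)
  have hc1 : c = 1 := by
    have h1 : n * m = 1 := by
      rw [← Nat.cast_inj (R := ℂ), Nat.cast_mul, ← hn, ← hm, mul_inv_cancel₀ hc, Nat.cast_one]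
    rw [hn, Nat.eq_one_of_mul_eq_one_right h1, Nat.cast_one]
  refine ⟨hc1, fun Z Y => ?_⟩
  have hd : Differentiable ℂ (fun x : MatE p q × MatE p q =>
      polNorm (A x.1) (A' x.2) - polNorm x.1 x.2) :=
    (differentiable_polNorm_comp (A : MatE p q →L[ℂ] MatE p q) A').fun_sub differentiable_polNorm
  have h0 : ∀ᶠ x in 𝓝 (0 : MatE p q × MatE p q),
      polNorm (A x.1) (A' x.2) - polNorm x.1 x.2 = 0 := by
    filter_upwards [h, eventually_polNorm_mem_slitPlane] with x h1 h2
    rw [← h1, hc1, one_mul, polLog, exp_log (slitPlane_ne_zero h2), sub_self]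
  have hz := eqOn_const_of_eventually isOpen_univ isPreconnected_univ hd.differentiableOn
    (mem_univ (0 : MatE p q × MatE p q)) h0
  have h1 := hz (mem_univ (Z, Y))
  exact sub_eq_zero.1 h1

lemma isFibAut_of_genNormI_eq {A : MatE p q ≃L[ℂ] MatE p q}
    (h : ∀ Z, genNormI (A Z) = genNormI Z) : IsFibAut A (fun _ => 0) := by
  have hmaps : ∀ B : MatE p q ≃L[ℂ] MatE p q, (∀ Z, genNormI (B Z) = genNormI Z) →
      MapsTo B (typeIDomain p q) (typeIDomain p q) := fun B hB Z hZ => by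
    refine mem_typeIDomain_of_genNormI_ne_zero fun s hs0 hs1 => ?_
    rw [← map_smul, hB]
    have := convex_typeIDomain zero_mem_typeIDomain hZ (sub_nonneg.2 hs1) hs0 (by ring)
    rw [smul_zero, zero_add, ← Complex.coe_smul] at this
    exact (genNormI_pos this).ne'
  refine ⟨⟨A.differentiable.differentiableOn, hmaps A h, A.symm,
    A.symm.differentiable.differentiableOn, hmaps A.symm fun Z => ?_,
    fun Z _ => A.symm_apply_apply Z, fun Z _ => A.apply_symm_apply Z⟩,
    differentiableOn_const _, fun Z _ => ?_⟩
  · rw [← h, A.apply_symm_apply]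
  · rw [h]; simp

end LinearModel

section LocalModel

variable {p q : ℕ} {F F' : MatE p q × ℂ → MatE p q × ℂ}

lemma eventually_fst_eq_of_fderiv_vert (hd : ∀ᶠ P in 𝓝 (0 : MatE p q × ℂ), DifferentiableAt ℂ F P)
    (hv : ∀ᶠ P in 𝓝 (0 : MatE p q × ℂ), (fderiv ℂ F P (0, 1)).1 = 0) :
    ∀ᶠ P in 𝓝 (0 : MatE p q × ℂ), (F P).1 = (F (P.1, 0)).1 := by
  obtain ⟨r, hr, hb⟩ := Metric.eventually_nhds_iff_ball.1 (hd.and hv)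
  filter_upwards [Metric.ball_mem_nhds (0 : MatE p q × ℂ) hr] with P hP
  have hP' : ‖P.1‖ < r ∧ ‖P.2‖ < r := by simpa [Prod.norm_def] using hP
  have hmem : ∀ w ∈ ball (0 : ℂ) r, (P.1, w) ∈ ball (0 : MatE p q × ℂ) r := fun w hw => by
    simpa [Prod.norm_def, hP'.1] using hw
  have hder : ∀ w ∈ ball (0 : ℂ) r, HasDerivAt (fun w => (F (P.1, w)).1) 0 w := fun w hw => by
    obtain ⟨h1, h2⟩ := hb _ (hmem w hw)
    have h3 := HasFDerivAt.comp_hasDerivAt w (f := fun w => (P.1, w)) h1.hasFDerivAt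
      ((hasDerivAt_const w P.1).prodMk (hasDerivAt_id w))
    have h4 := (ContinuousLinearMap.fst ℂ (MatE p q) ℂ).hasFDerivAt.comp_hasDerivAt w h3
    have e : (ContinuousLinearMap.fst ℂ (MatE p q) ℂ) (fderiv ℂ F (P.1, w) (0, 1)) = 0 := h2
    rw [e] at h4
    exact h4
  exact isOpen_ball.is_const_of_deriv_eq_zero (convex_ball _ _).isPreconnected
    (fun w hw => (hder w hw).differentiableAt.differentiableWithinAt)
    (fun w hw => (hder w hw).deriv) (by simpa using hP'.2) (by simpa using hr)

lemma eventually_eq_mul_of_additive {Γ : ℂ → ℂ} {γ : ℂ} (hd : ∀ᶠ w in 𝓝 0, DifferentiableAt ℂ Γ w)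
    (h0 : HasDerivAt Γ γ 0)
    (h : ∀ᶠ x in 𝓝 (0 : ℂ) ×ˢ 𝓝 (0 : ℂ), Γ (x.2 - x.1) = Γ x.2 + Γ (-x.1)) :
    ∀ᶠ w in 𝓝 0, Γ w = γ * w := by
  have hΓ0 : Γ 0 = 0 := by
    have h1 := h.curry.self_of_nhds.self_of_nhds
    simpa using h1
  have hder : ∀ᶠ w in 𝓝 (0 : ℂ), HasDerivAt Γ γ w := by
    have hneg : Tendsto (fun w : ℂ => -w) (𝓝 0) (𝓝 0) := continuous_neg.tendsto' _ _ neg_zero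
    filter_upwards [hneg.eventually h.curry, hd] with w h1 h2
    have h3 : HasDerivAt (fun z => Γ (z + w)) (deriv Γ w) 0 := by
      have := h2.hasDerivAt
      rw [← zero_add w] at this
      simpa using this.comp_add_const 0 w
    have h4 : HasDerivAt (fun z => Γ z + Γ w) γ 0 := h0.add_const _
    have h5 := h4.congr_of_eventuallyEq (f₁ := fun z => Γ (z + w)) (by
      filter_upwards [h1] with z hz
      simpa using hz)
    rw [h5.unique h3]
    exact h2.hasDerivAt
  obtain ⟨r, hr, hb⟩ := Metric.eventually_nhds_iff_ball.1 hder
  filter_upwards [Metric.ball_mem_nhds (0 : ℂ) hr] with w hw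
  have hder' : ∀ w ∈ ball (0 : ℂ) r, HasDerivAt (fun w => Γ w - γ * w) 0 w := fun w hw => by
    have := (hb w hw).fun_sub ((hasDerivAt_id' w).const_mul γ)
    rwa [mul_one, sub_self] at this
  have := isOpen_ball.is_const_of_deriv_eq_zero (convex_ball _ _).isPreconnected
    (fun w hw => (hder' w hw).differentiableAt.differentiableWithinAt)
    (fun w hw => (hder' w hw).deriv) hw (mem_ball_self hr)
  rw [hΓ0, mul_zero, sub_zero] at this
  exact sub_eq_zero.1 this

namespace IsPolPair

lemma eventually_snd_eq_neg (h : IsPolPair F F')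
    (hf' : ∀ᶠ P in 𝓝 (0 : MatE p q × ℂ), (F' P).1 = linPart F' P.1) :
    ∀ᶠ P in 𝓝 (0 : MatE p q × ℂ), (F P).2 = -(F' (0, -P.2)).2 := by
  have ht : Tendsto (fun P : MatE p q × ℂ => (P.1, P.2, (0 : MatE p q))) (𝓝 0) (𝓝 0) := by
    have : Continuous (fun P : MatE p q × ℂ => (P.1, P.2, (0 : MatE p q))) := by fun_prop
    exact this.tendsto' 0 0 rfl
  have ht' : Tendsto (fun P : MatE p q × ℂ => ((0 : MatE p q), -P.2)) (𝓝 0) (𝓝 0) := by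
    have : Continuous (fun P : MatE p q × ℂ => ((0 : MatE p q), -P.2)) := by fun_prop
    exact this.tendsto' 0 0 (by simp)
  filter_upwards [ht.eventually h.eq, ht'.eventually hf'] with P h1 h2
  simp only [polLog_zero_right, zero_sub] at h1
  rw [h2, _root_.map_zero, polLog_zero_right] at h1
  exact eq_neg_of_add_eq_zero_left h1

/-- If both maps are linear in the base variable, the fibre component is linear as well. -/
lemma eventually_snd_eq_mul (h : IsPolPair F F') (i : Fin p) (j : Fin q)
    (hf : ∀ᶠ P in 𝓝 (0 : MatE p q × ℂ), (F P).1 = linPart F P.1)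
    (hf' : ∀ᶠ P in 𝓝 (0 : MatE p q × ℂ), (F' P).1 = linPart F' P.1) :
    ∀ᶠ P in 𝓝 (0 : MatE p q × ℂ), (F P).2 = scalPart F * P.2 := by
  set Γ : ℂ → ℂ := fun w => (F (0, w)).2 with hΓ
  have hinr : Tendsto (fun w : ℂ => ((0 : MatE p q), w)) (𝓝 0) (𝓝 0) := by
    have : Continuous (fun w : ℂ => ((0 : MatE p q), w)) := by fun_prop
    exact this.tendsto' 0 0 rfl
  have hsnd : Tendsto (fun P : MatE p q × ℂ => P.2) (𝓝 0) (𝓝 0) := continuous_snd.tendsto' _ _ rfl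
  have hFΓ : ∀ᶠ P in 𝓝 (0 : MatE p q × ℂ), (F P).2 = Γ P.2 := by
    have h1 := h.eventually_snd_eq_neg hf'
    filter_upwards [h1, hsnd.eventually (hinr.eventually h1)] with P h2 h3
    exact h2.trans h3.symm
  have hF'Γ : ∀ᶠ P in 𝓝 (0 : MatE p q × ℂ), (F' P).2 = -Γ (-P.2) :=
    h.symm.eventually_snd_eq_neg hf
  have hder : ∀ w, DifferentiableAt ℂ F (0, w) →
      HasDerivAt Γ (fderiv ℂ F (0, w) (0, 1)).2 w := fun w hw => by
    have h3 := HasFDerivAt.comp_hasDerivAt w (f := fun w => ((0 : MatE p q), w)) hw.hasFDerivAt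
      ((hasDerivAt_const w (0 : MatE p q)).prodMk (hasDerivAt_id w))
    exact (ContinuousLinearMap.snd ℂ (MatE p q) ℂ).hasFDerivAt.comp_hasDerivAt w h3
  suffices hlin : ∀ᶠ w in 𝓝 0, Γ w = scalPart F * w by
    filter_upwards [hFΓ, hsnd.eventually hlin] with P h1 h2
    rw [h1, h2]
  refine eventually_eq_mul_of_additive ((hinr.eventually h.diff).mono fun w hw =>
    (hder w hw).differentiableAt) (hder 0 h.diff.self_of_nhds) ?_
  have h1 : Tendsto (fun x : MatE p q × ℂ × MatE p q => x.1) (𝓝 0) (𝓝 0) :=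
    continuous_fst.tendsto' _ _ rfl
  have h2 : Tendsto (fun x : MatE p q × ℂ × MatE p q => x.2.1) (𝓝 0) (𝓝 0) :=
    (continuous_fst.comp continuous_snd).tendsto' _ _ rfl
  have h3 : Tendsto (fun x : MatE p q × ℂ × MatE p q => x.2.2) (𝓝 0) (𝓝 0) :=
    (continuous_snd.comp continuous_snd).tendsto' _ _ rfl
  have h12 : Tendsto (fun x : MatE p q × ℂ × MatE p q => (x.1, x.2.1)) (𝓝 0) (𝓝 0) :=
    h1.prodMk_nhds h2
  have h4 : Tendsto (fun x : MatE p q × ℂ × MatE p q => polLog x.1 x.2.2 - x.2.1) (𝓝 0) (𝓝 0) := by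
    simpa using (tendsto_polLog_of h1 h3).sub h2
  have h34 : Tendsto (fun x : MatE p q × ℂ × MatE p q => (x.2.2, polLog x.1 x.2.2 - x.2.1))
      (𝓝 0) (𝓝 0) := h3.prodMk_nhds h4
  have hadd : ∀ᶠ x in 𝓝 (0 : MatE p q × ℂ × MatE p q),
      Γ x.2.1 - Γ (x.2.1 - polLog x.1 x.2.2) = polLog (linPart F x.1) (linPart F' x.2.2) := by
    filter_upwards [h.eq, h12.eventually hf, h12.eventually hFΓ, h34.eventually hf',
      h34.eventually hF'Γ] with x e e1 e2 e3 e4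
    rw [e1, e2, e3, e4, neg_sub] at e
    rw [← e, sub_eq_add_neg]
  have hsw : Tendsto (fun x : MatE p q × MatE p q × ℂ => (x.2.1, x.2.2, x.1))
      (𝓝 0 ×ˢ 𝓝 0) (𝓝 0) := by
    rw [← nhds_prod_eq]
    have : Continuous (fun x : MatE p q × MatE p q × ℂ => (x.2.1, x.2.2, x.1)) := by fun_prop
    exact this.tendsto' _ _ rfl
  obtain ⟨ε, hε, h5⟩ := exists_single_of_eventually i j (hsw.eventually hadd).curry
  have hexp : Tendsto (fun s : ℂ => (1 - cexp s) / ε) (𝓝 0) (𝓝 0) := by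
    have : Continuous (fun s : ℂ => (1 - cexp s) / ε) := by fun_prop
    exact this.tendsto' _ _ (by simp)
  have hcurve : Tendsto (fun x : ℂ × ℂ =>
      ((Pi.single i (Pi.single j ((1 - cexp x.1) / ε)) : MatE p q), x.2)) (𝓝 0 ×ˢ 𝓝 0) (𝓝 0) :=
    ((tendsto_single i j hexp).comp tendsto_fst).prodMk_nhds tendsto_snd
  have hzero : Tendsto (fun x : ℂ × ℂ => (x.1, (0 : ℂ))) (𝓝 0 ×ˢ 𝓝 0) (𝓝 0 ×ˢ 𝓝 0) :=
    tendsto_fst.prodMk (tendsto_const_nhds)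
  have h6 := hcurve.eventually h5
  have hΓ0 : Γ 0 = 0 := by
    have : F (0, 0) = 0 := h.map_zero
    simp [hΓ, this]
  filter_upwards [h6, hzero.eventually h6,
    tendsto_fst.eventually eventually_abs_im_lt_pi] with x h7 h8 h9
  have hl : polLog (Pi.single i (Pi.single j ((1 - cexp x.1) / ε)) : MatE p q)
      (Pi.single i (Pi.single j ε)) = x.1 := by
    rw [polLog, polNorm_single_single, div_mul_cancel₀ _ hε, sub_sub_cancel,
      log_exp (abs_lt.1 h9).1 (abs_lt.1 h9).2.le]
  simp only [hl] at h7 h8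
  rw [← h7, hΓ0, zero_sub, zero_sub] at h8
  linear_combination h8

end IsPolPair

/-- A normalized map that respects the fibration is a linear automorphism near the origin. -/
lemma PreservesAt.eventuallyEq_fibMap (h : PreservesAt F 0) (h0 : F 0 = 0) (hp : 2 ≤ p)
    (hq : 2 ≤ q) (hγ : scalPart F ≠ 0)
    (hv : ∀ᶠ P in 𝓝 (0 : MatE p q × ℂ), (fderiv ℂ F P (0, 1)).1 = 0) :
    ∃ A : MatE p q → MatE p q, IsFibAut A (fun _ => 0) ∧ F =ᶠ[𝓝 0] fibMap A (fun _ => 0) := by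
  let i : Fin p := ⟨0, by lia⟩
  let j : Fin q := ⟨0, by lia⟩
  have hpair := h.isPolPair h0
  have hγ' : scalPart (starMap F) ≠ 0 := by rwa [← hpair.scalPart_eq i j]
  have hfst : Tendsto (fun P : MatE p q × ℂ => P.1) (𝓝 0) (𝓝 0) := continuous_fst.tendsto' _ _ rfl
  have hf : ∀ᶠ P in 𝓝 (0 : MatE p q × ℂ), (F P).1 = linPart F P.1 := by
    have h1 := hpair.symm.eventually_fst_eq hγ' (U := 0) (by
      rw [map_zero, hpair.symm.vertPart_eq_zero hp hq hγ'])
    filter_upwards [eventually_fst_eq_of_fderiv_vert h.diff hv, hfst.eventually h1] with P h2 h3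
    rw [h2, h3.2.1]
    simp
  have hf' : ∀ᶠ P in 𝓝 (0 : MatE p q × ℂ), (starMap F P).1 = linPart (starMap F) P.1 := by
    filter_upwards [tendsto_starMap_zero.eventually hf] with P hP
    have h1 := linPart_starMap h.diff.self_of_nhds (star P.1)
    rw [star_star] at h1
    rw [h1]
    exact congrArg star hP
  have hsnd := hpair.eventually_snd_eq_mul i j hf hf'
  let A : MatE p q ≃L[ℂ] MatE p q := (LinearEquiv.ofBijective (linPart F : MatE p q →ₗ[ℂ] MatE p q)
    (hpair.linPart_bijective hγ)).toContinuousLinearEquiv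
  let A' : MatE p q ≃L[ℂ] MatE p q := (LinearEquiv.ofBijective
    (linPart (starMap F) : MatE p q →ₗ[ℂ] MatE p q)
    (hpair.symm.linPart_bijective hγ')).toContinuousLinearEquiv
  have hA : ∀ X, A X = linPart F X := fun _ => rfl
  have hA' : ∀ X, A' X = linPart (starMap F) X := fun _ => rfl
  have hpow : ∀ᶠ x in 𝓝 (0 : MatE p q × MatE p q),
      cexp (scalPart F * polLog x.1 x.2) = polNorm (A x.1) (A' x.2) := by
    have h1 : Tendsto (fun x : MatE p q × MatE p q => x.1) (𝓝 0) (𝓝 0) :=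
      continuous_fst.tendsto' _ _ rfl
    have h2 : Tendsto (fun x : MatE p q × MatE p q => (x.2, (0 : ℂ))) (𝓝 0) (𝓝 0) := by
      have : Continuous (fun x : MatE p q × MatE p q => (x.2, (0 : ℂ))) := by fun_prop
      exact this.tendsto' _ _ rfl
    have h3 : Tendsto (fun x : MatE p q × MatE p q => (x.1, polLog x.1 x.2)) (𝓝 0) (𝓝 0) :=
      h1.prodMk_nhds tendsto_polLog
    filter_upwards [hpair.eventually_exp_snd, h3.eventually hf, h3.eventually hsnd,
      h2.eventually hf'] with x e e1 e2 e3
    rw [e1, e2, e3] at e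
    rw [e, hA, hA']
  obtain ⟨hone, hpol⟩ := polNorm_eq_of_pow i j hγ hpow
  refine ⟨A, isFibAut_of_genNormI_eq fun Z => ?_, ?_⟩
  · apply Complex.ofReal_injective
    rw [← polNorm_star_self, ← polNorm_star_self, ← hpol Z (star Z), hA', hA,
      linPart_starMap h.diff.self_of_nhds]
  · filter_upwards [hf, hsnd] with P h1 h2
    refine Prod.ext h1 ?_
    rw [h2, hone]
    simp [fibMap]

end LocalModel

section LocalRigidity

variable {p q : ℕ} {F : MatE p q × ℂ → MatE p q × ℂ} {m : MatE p q × ℂ}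

lemma fibMap_fibMap (ψ₂ ψ₁ : MatE p q → MatE p q) (H₂ H₁ : MatE p q → ℂ) (P : MatE p q × ℂ) :
    fibMap ψ₂ H₂ (fibMap ψ₁ H₁ P) = fibMap (ψ₂ ∘ ψ₁) (fun Z => H₁ Z + H₂ (ψ₁ Z)) P := by
  simp [fibMap, add_assoc]

lemma IsBundleAut.eventuallyEq_fibMap {Φ Φ' Φ₂ Φ₂' : MatE p q × ℂ → MatE p q × ℂ}
    (hΦ : IsBundleAut Φ Φ') (hΦ₂ : IsBundleAut Φ₂ Φ₂') (hm : m.1 ∈ typeIDomain p q)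
    (hF : ContinuousAt F m) (hFm : (F m).1 ∈ typeIDomain p q)
    (h : ∃ ψ H, IsFibAut ψ H ∧ (Φ₂ ∘ F ∘ Φ') =ᶠ[𝓝 (Φ m)] fibMap ψ H) :
    ∃ ψ H, IsFibAut ψ H ∧ F =ᶠ[𝓝 m] fibMap ψ H := by
  obtain ⟨ψ, H, hψ, he⟩ := h
  obtain ⟨ψ₁, H₁, hψ₁, e₁⟩ := hΦ.fib
  obtain ⟨ψ₂, H₂, hψ₂, e₂⟩ := hΦ₂.fib'
  refine ⟨_, _, hψ₂.comp (hψ.comp hψ₁), ?_⟩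
  filter_upwards [mem_nhds_typeIDomain_prod hm, hF.eventually (mem_nhds_typeIDomain_prod hFm),
    (hΦ.differentiableAt hm).continuousAt.eventually he] with x h1 h2 h3
  simp only [Function.comp_apply, hΦ.left_inv x h1] at h3
  rw [← fibMap_fibMap, ← fibMap_fibMap, ← e₁, ← e₂, ← h3, hΦ₂.left_inv _ h2]

/-- Near a point where it does not vanish on complex tangent vectors, a map preserving the
hypersurface is a fibred automorphism. -/
lemma PreservesAt.exists_isFibAut_of_not_vanishesAt (h : PreservesAt F m) (hp : 2 ≤ p) (hq : 2 ≤ q)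
    (hv : ¬ VanishesAt F m) : ∃ ψ H, IsFibAut ψ H ∧ F =ᶠ[𝓝 m] fibMap ψ H := by
  obtain ⟨Φ, Φ', Φ₂, Φ₂', hΦ, hΦ₂, hm, h1, h2, h3, -⟩ := h.exists_normalization
  have h4 := mt h3 hv
  have h5 := (h1.fderiv_eq_zero_or h2 hp hq).resolve_left h4
  push Not at h4
  obtain ⟨X, hX⟩ := h4
  obtain ⟨A, hA, he⟩ := h1.eventuallyEq_fibMap h2 hp hq h5.1 (h1.eventually_fderiv_vert hp hq hX)
  exact hΦ.eventuallyEq_fibMap hΦ₂ h.mem.1 h.diff.self_of_nhds.continuousAt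
    (h.maps.self_of_nhds h.mem).1 ⟨A, _, hA, by rwa [hm]⟩

/-- A nonconstant germ preserving the hypersurface agrees with fibred automorphisms near
points arbitrarily close to the base point. -/
theorem PreservesAt.frequently_exists_isFibAut (h : PreservesAt F m) (hp : 2 ≤ p) (hq : 2 ≤ q)
    (hnc : ¬ ∀ᶠ x in 𝓝 m, F x = F m) :
    ∃ᶠ P in 𝓝 m, ∃ ψ H, IsFibAut ψ H ∧ F =ᶠ[𝓝 P] fibMap ψ H := by
  obtain ⟨Φ, Φ', Φ₂, Φ₂', hΦ, hΦ₂, hm, h1, h2, -, -⟩ := h.exists_normalization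
  have hFm : (F m).1 ∈ typeIDomain p q := (h.maps.self_of_nhds h.mem).1
  have hFΩ : ∀ᶠ x in 𝓝 m, (F x).1 ∈ typeIDomain p q :=
    h.diff.self_of_nhds.continuousAt.eventually (mem_nhds_typeIDomain_prod hFm)
  have hΦm : Tendsto Φ (𝓝 m) (𝓝 0) := by
    simpa only [hm] using (hΦ.differentiableAt h.mem.1).continuousAt.tendsto
  have hΦ'0 : Φ' 0 = m := by rw [← hm, hΦ.left_inv m h.mem.1]
  have hΦ' : Tendsto Φ' (𝓝 0) (𝓝 m) := by
    simpa only [hΦ'0] using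
      (hΦ.symm.differentiableAt (P := 0) zero_mem_typeIDomain).continuousAt.tendsto
  have hnc' : ¬ ∀ᶠ x in 𝓝 0, (Φ₂ ∘ F ∘ Φ') x = (Φ₂ ∘ F ∘ Φ') 0 := by
    intro hc
    apply hnc
    filter_upwards [hΦm.eventually hc, mem_nhds_typeIDomain_prod h.mem.1, hFΩ] with x h3 h4 h5
    simp only [Function.comp_apply, hΦ'0, hΦ.left_inv x h4] at h3
    rw [← hΦ₂.left_inv _ h5, h3, hΦ₂.left_inv _ hFm]
  have h3 := h1.frequently_not_vanishesAt ⟨0, by lia⟩ ⟨0, by lia⟩ hnc'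
  refine hΦ'.frequently ?_
  refine (h3.and_eventually (h1.eventually.and
    ((hΦ'.eventually hFΩ).and (hΦ'.eventually h.diff)))).mono ?_
  rintro x ⟨⟨hx, hxv⟩, hxp, hxF, hxd⟩
  refine hΦ.eventuallyEq_fibMap hΦ₂ (hΦ.symm.mapsTo hx.1) hxd.continuousAt hxF ?_
  rw [hΦ.right_inv x hx.1]
  exact (hxp hx).exists_isFibAut_of_not_vanishesAt hp hq hxv

end LocalRigidity

section FibreExponential

variable {p q : ℕ} {lam : ℝ}

/-- The fibrewise exponential map `(Z, ω) ↦ (Z, exp (λ ω))`. -/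
def expMap (lam : ℝ) (P : MatE p q × ℂ) : MatE p q × ℂ := (P.1, cexp (lam * P.2))

/-- The branch at `a` of the inverse of `ω ↦ exp (λ ω)`. -/
def fibLog (lam : ℝ) (a ξ : ℂ) : ℂ := a + log (ξ / cexp (lam * a)) / lam

lemma exp_fibLog (hlam : 0 < lam) (a : ℂ) {ξ : ℂ} (hξ : ξ ≠ 0) :
    cexp (lam * fibLog lam a ξ) = ξ := by
  have h0 : (lam : ℂ) ≠ 0 := ofReal_ne_zero.2 hlam.ne'
  rw [fibLog, mul_add, mul_div_cancel₀ _ h0, Complex.exp_add,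
    exp_log (div_ne_zero hξ (Complex.exp_ne_zero _)), mul_div_cancel₀ _ (Complex.exp_ne_zero _)]

lemma fibLog_exp (a : ℂ) : fibLog lam a (cexp (lam * a)) = a := by
  rw [fibLog, div_self (Complex.exp_ne_zero _), log_one, zero_div, add_zero]

lemma eventually_differentiableAt_fibLog (a : ℂ) :
    ∀ᶠ ξ in 𝓝 (cexp (lam * a)), DifferentiableAt ℂ (fibLog lam a) ξ := by
  have hc : Continuous fun ξ : ℂ => ξ / cexp (lam * a) := by fun_prop
  filter_upwards [(hc.tendsto' _ 1 (div_self (Complex.exp_ne_zero _))).eventually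
    (isOpen_slitPlane.mem_nhds one_mem_slitPlane)] with ξ hξ
  exact (((differentiableAt_id.div_const _).clog hξ).div_const _).const_add a

lemma exists_exp_eq (hlam : 0 < lam) {ξ : ℂ} (hξ : ξ ≠ 0) : ∃ a : ℂ, cexp (lam * a) = ξ :=
  ⟨fibLog lam 0 ξ, exp_fibLog hlam 0 hξ⟩

lemma differentiable_expMap : Differentiable ℂ (expMap (p := p) (q := q) lam) := by
  unfold expMap
  fun_prop

lemma normSq_exp (z : ℂ) : normSq (cexp z) = Real.exp (2 * z.re) := by
  rw [normSq_eq_norm_sq, norm_exp, ← Real.exp_nat_mul]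
  norm_num

lemma genNormI_rpow {Z : MatE p q} (hZ : Z ∈ typeIDomain p q) (lam : ℝ) :
    genNormI Z ^ lam = Real.exp (lam * Real.log (genNormI Z)) := by
  rw [Real.rpow_def_of_pos (genNormI_pos hZ), mul_comm]

lemma expMap_mem_iff (hlam : 0 < lam) {P : MatE p q × ℂ} :
    expMap lam P ∈ circTypeIPow p q lam ↔ P ∈ logBundle p q := by
  refine and_congr_right fun hP => ?_
  have hP' : P.1 ∈ typeIDomain p q := hP
  simp only [expMap]
  rw [normSq_exp, genNormI_rpow hP', Real.exp_eq_exp, re_ofReal_mul, mul_left_comm]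
  exact mul_right_inj' hlam.ne'

lemma snd_ne_zero_of_mem {x : MatE p q × ℂ} (hx : x ∈ circTypeIPow p q lam) : x.2 ≠ 0 := by
  intro h0
  have h := hx.2
  rw [h0, normSq_zero] at h
  exact (Real.rpow_pos_of_pos (genNormI_pos hx.1) lam).ne h

/-- The local section of the fibrewise exponential through `P`. -/
lemma tendsto_fibLog_section (P : MatE p q × ℂ) :
    Tendsto (fun x : MatE p q × ℂ => (x.1, fibLog lam P.2 x.2)) (𝓝 (expMap lam P)) (𝓝 P) := by
  have h1 : Tendsto (fun x : MatE p q × ℂ => x.1) (𝓝 (expMap lam P)) (𝓝 P.1) :=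
    continuous_fst.continuousAt
  have h2 : Tendsto (fun x : MatE p q × ℂ => x.2) (𝓝 (expMap lam P)) (𝓝 (cexp (lam * P.2))) :=
    continuous_snd.continuousAt
  have h3 : Tendsto (fibLog lam P.2) (𝓝 (cexp (lam * P.2))) (𝓝 P.2) := by
    have := (eventually_differentiableAt_fibLog (lam := lam) P.2).self_of_nhds.continuousAt.tendsto
    rwa [fibLog_exp] at this
  exact h1.prodMk_nhds (h3.comp h2)

lemma eventually_expMap_section (hlam : 0 < lam) (P : MatE p q × ℂ) :
    ∀ᶠ x in 𝓝 (expMap lam P), expMap lam (x.1, fibLog lam P.2 x.2) = x := by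
  have h2 : Tendsto (fun x : MatE p q × ℂ => x.2) (𝓝 (expMap lam P)) (𝓝 (cexp (lam * P.2))) :=
    continuous_snd.continuousAt
  filter_upwards [h2.eventually (isOpen_ne.mem_nhds (Complex.exp_ne_zero (lam * P.2)))] with x hx
  exact Prod.ext rfl (exp_fibLog hlam P.2 hx)

/-- A map preserving the circle bundle lifts through the fibrewise exponential. -/
lemma exists_preservesAt_lift (hlam : 0 < lam) {U : Set (MatE p q × ℂ)} (hU : IsOpen U)
    {F : MatE p q × ℂ → MatE p q × ℂ} (hF : DifferentiableOn ℂ F U)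
    (hFmap : MapsTo F (U ∩ circTypeIPow p q lam) (circTypeIPow p q lam))
    {m : MatE p q × ℂ} (hm : expMap lam m ∈ U ∩ circTypeIPow p q lam) :
    ∃ Fl : MatE p q × ℂ → MatE p q × ℂ, PreservesAt Fl m ∧
      ∀ᶠ P in 𝓝 m, expMap lam P ∈ U ∧ expMap lam (Fl P) = F (expMap lam P) := by
  obtain ⟨b, hb⟩ := exists_exp_eq hlam (snd_ne_zero_of_mem (hFmap hm))
  have hE : Tendsto (expMap lam) (𝓝 m) (𝓝 (expMap lam m)) :=
    differentiable_expMap.continuous.continuousAt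
  have hEU : ∀ᶠ P in 𝓝 m, expMap lam P ∈ U := hE.eventually (hU.mem_nhds hm.1)
  have hdF : ∀ P, expMap lam P ∈ U → DifferentiableAt ℂ (fun P => F (expMap lam P)) P :=
    fun P hP => DifferentiableAt.comp P (g := F) (hF.differentiableAt (hU.mem_nhds hP))
      (differentiable_expMap P)
  have hsnd : Tendsto (fun P => (F (expMap lam P)).2) (𝓝 m) (𝓝 (cexp (lam * b))) := by
    rw [hb]
    exact (hdF m hm.1).continuousAt.snd
  have heq : ∀ᶠ P in 𝓝 m,
      expMap lam ((F (expMap lam P)).1, fibLog lam b (F (expMap lam P)).2) = F (expMap lam P) := by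
    filter_upwards [hsnd.eventually (isOpen_ne.mem_nhds (Complex.exp_ne_zero (lam * b)))] with P hP
    exact Prod.ext rfl (exp_fibLog hlam b hP)
  refine ⟨fun P => ((F (expMap lam P)).1, fibLog lam b (F (expMap lam P)).2),
    ⟨(expMap_mem_iff hlam).1 hm.2, ?_, ?_⟩, hEU.and heq⟩
  · filter_upwards [hEU, hsnd.eventually (eventually_differentiableAt_fibLog b)] with P h1 h2
    exact (hdF P h1).fst.prodMk (DifferentiableAt.comp P (g := fibLog lam b) h2 (hdF P h1).snd)
  · filter_upwards [hEU, heq] with P h1 h2 hP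
    rw [← expMap_mem_iff hlam, h2]
    exact hFmap ⟨h1, (expMap_mem_iff hlam).2 hP⟩

end FibreExponential

end

/-- Corollary 1.6 of the paper specialized to `Ω₁ = Ω₂ = D^I_{p,q}`, `min(p,q) ≥ 2`:
a nonconstant holomorphic map defined near a piece of `M = {|ξ|² = N(Z)^λ}` sending the
piece into `M` coincides, on a nonempty open set, with a norm-preserving holomorphic
isomorphism `(Z,ξ) ↦ (ψ(Z), ξ·h(Z))` with `ψ ∈ Aut(Ω)`, `h` holomorphic nowhere zero,
and `N(ψ(Z))^λ = |h(Z)|² N(Z)^λ` on `Ω`. -/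
theorem typeI_power_circle_bundle_rigidity (p q : ℕ) (hpq : 2 ≤ min p q)
    (lam : ℝ) (hlam : 0 < lam)
    (U : Set ((Fin p → Fin q → ℂ) × ℂ)) (hUopen : IsOpen U) (hUconn : IsConnected U)
    (hUM : (U ∩ circTypeIPow p q lam).Nonempty)
    (F : ((Fin p → Fin q → ℂ) × ℂ) → ((Fin p → Fin q → ℂ) × ℂ))
    (hF : DifferentiableOn ℂ F U)
    (hFnc : ¬ ∃ c, Set.EqOn F (fun _ => c) U)
    (hFmap : Set.MapsTo F (U ∩ circTypeIPow p q lam) (circTypeIPow p q lam)) :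
    ∃ (ψ : (Fin p → Fin q → ℂ) → (Fin p → Fin q → ℂ)) (h : (Fin p → Fin q → ℂ) → ℂ),
      Biholo ψ (typeIDomain p q) (typeIDomain p q) ∧
      DifferentiableOn ℂ h (typeIDomain p q) ∧
      (∀ Z ∈ typeIDomain p q, h Z ≠ 0) ∧
      (∀ Z ∈ typeIDomain p q,
        genNormI (ψ Z) ^ lam = Complex.normSq (h Z) * genNormI Z ^ lam) ∧
      ∃ V : Set ((Fin p → Fin q → ℂ) × ℂ), IsOpen V ∧ V.Nonempty ∧ V ⊆ U ∧
        Set.EqOn F (fun P => (ψ P.1, P.2 * h P.1)) V := by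
  obtain ⟨hp, hq⟩ := le_min_iff.1 hpq
  obtain ⟨x₀, hx₀⟩ := hUM
  obtain ⟨a, ha⟩ := exists_exp_eq hlam (snd_ne_zero_of_mem hx₀.2)
  obtain ⟨m, rfl⟩ : ∃ m : MatE p q × ℂ, expMap lam m = x₀ := ⟨(x₀.1, a), Prod.ext rfl ha⟩
  obtain ⟨Fl, hpres, hlift⟩ := exists_preservesAt_lift hlam hUopen hF hFmap hx₀
  have hnc : ¬ ∀ᶠ x in nhds m, Fl x = Fl m := by
    intro hc
    refine hFnc ⟨F (expMap lam m), eqOn_const_of_eventually hUopen hUconn.isPreconnected hF hx₀.1 ?_⟩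
    filter_upwards [(tendsto_fibLog_section (lam := lam) m).eventually (hc.and hlift),
      eventually_expMap_section hlam m] with x h1 h2
    rw [← hlift.self_of_nhds.2, ← h1.1, h1.2.2, h2]
  obtain ⟨P, ⟨ψ, H, hψ, he⟩, hP⟩ := ((hpres.frequently_exists_isFibAut hp hq hnc).and_eventually
    hlift.eventually_nhds).exists
  refine ⟨ψ, fun Z => cexp (lam * H Z), hψ.1, (hψ.2.1.const_mul _).cexp,
    fun Z _ => Complex.exp_ne_zero _, fun Z hZ => ?_, ?_⟩
  · rw [genNormI_rpow (hψ.1.2.1 hZ), genNormI_rpow hZ, normSq_exp, ← Real.exp_add, hψ.2.2 Z hZ,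
      re_ofReal_mul]
    ring_nf
  · have hV : ∀ᶠ x in nhds (expMap lam P), x ∈ U ∧ F x = (ψ x.1, x.2 * cexp (lam * H x.1)) := by
      filter_upwards [(tendsto_fibLog_section (lam := lam) P).eventually (he.and hP),
        eventually_expMap_section hlam P] with x h1 h2
      have h3 := h1.2
      rw [h2, h1.1] at h3
      refine ⟨h3.1, h3.2.symm.trans (Prod.ext rfl ?_)⟩
      have h4 : cexp (lam * fibLog lam P.2 x.2) = x.2 := congrArg Prod.snd h2
      simp only [expMap, fibMap]
      rw [mul_add, Complex.exp_add, h4]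
    obtain ⟨V, hVs, hVo, hVm⟩ := _root_.mem_nhds_iff.1 hV
    exact ⟨V, hVo, ⟨_, hVm⟩, fun x hx => (hVs hx).1, fun x hx => (hVs hx).2⟩
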